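/- Let μ satisfy Assumption 1 and let t > 1. Denote by ρ_t the density of the absolutely continuous part of μ^{⊞t}. Let I_t be the number of connected components of the support of the absolutely continuous part of μ^{⊞t}, let C_t^0 be the number of points in the interior of that support at which ρ_t vanishes, and let C_t^∞ be the number of non-atomic points of that support at which ρ_t diverges. Set 𝒵_μ := {E ∈ ℝ \ supp(μ) : m_μ(E) = 0}. Then I_t + C_t^0 ≤ n_ac + |𝒵_μ| ≤ 2·n_ac + n_pp^out − 1. Moreover C_t^∞ equals the number of atoms of μ with mass exactly 1 − 1/t. -/

import Mathlib

open MeasureTheory Topology Filter Set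

noncomputable section

/-- The open upper half-plane ℂ⁺. -/
def UHP : Set ℂ := {z : ℂ | 0 < z.im}

/-- The closed upper half-plane ℂ⁺ ∪ ℝ. -/
def CUHP : Set ℂ := {z : ℂ | 0 ≤ z.im}

/-- Cauchy–Stieltjes transform `m_μ(z) = ∫ 1/(x−z) dμ(x)`. -/
def stT (μ : Measure ℝ) (z : ℂ) : ℂ := ∫ x, ((x : ℂ) - z)⁻¹ ∂μ

/-- Real-valued Cauchy–Stieltjes transform at real points (outside the support). -/
def stTR (μ : Measure ℝ) (E : ℝ) : ℝ := ∫ x, (x - E)⁻¹ ∂μ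

/-- Negative reciprocal Cauchy–Stieltjes transform `F_μ = −1/m_μ`. -/
def nrT (μ : Measure ℝ) (z : ℂ) : ℂ := -(stT μ z)⁻¹

/-- Support of a Borel measure on ℝ (the smallest closed set of full measure). -/
def msupp (μ : Measure ℝ) : Set ℝ := {x : ℝ | ∀ ε > 0, 0 < μ (Set.Ioo (x - ε) (x + ε))}

/-- Absolutely continuous part of μ with respect to Lebesgue measure. -/
def acPart (μ : Measure ℝ) : Measure ℝ := volume.withDensity (μ.rnDeriv volume)

/-- `I_μ(ω) = ∫ 1/|x−ω|² dμ(x)`. -/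
def Ifun (μ : Measure ℝ) (w : ℂ) : ℝ := ∫ x, (Complex.normSq ((x : ℂ) - w))⁻¹ ∂μ

/-- A sequence of the upper half-plane converging non-tangentially to `E ∈ ℝ`. -/
def NonTangentialSeq (z : ℕ → ℂ) (E : ℝ) : Prop :=
  (∀ n, z n ∈ UHP) ∧ Tendsto z atTop (𝓝 (E : ℂ)) ∧
    ∃ C : ℝ, ∀ n, |(z n).re - E| ≤ C * (z n).im

/-- The density `ρ_μ` of the a.c. part of `μ` vanishes at `x`
(via the Stieltjes inversion formula). -/
def densityVanishesAt (μ : Measure ℝ) (x : ℝ) : Prop :=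
  Tendsto (fun η : ℝ => (stT μ ((x : ℂ) + (η : ℂ) * Complex.I)).im) (𝓝[>] 0) (𝓝 0)

/-- The density `ρ_μ` of the a.c. part of `μ` diverges at `x`. -/
def densityDivergesAt (μ : Measure ℝ) (x : ℝ) : Prop :=
  Tendsto (fun η : ℝ => (stT μ ((x : ℂ) + (η : ℂ) * Complex.I)).im) (𝓝[>] 0) atTop

/-- Assumption 1. -/
structure Assumption1 (μ : Measure ℝ) (nac npp nppout : ℕ)
    (Em Ep : Fin nac → ℝ) (atom : Fin npp → ℝ) (ρ : ℝ → ℝ) : Prop where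
  prob : IsProbabilityMeasure μ
  compact : IsCompact (msupp μ)
  nac_pos : 1 ≤ nac
  npp_pos : 1 ≤ npp
  ρ_nonneg : ∀ x, 0 ≤ ρ x
  ac_density : acPart μ = volume.withDensity fun x => ENNReal.ofReal (ρ x)
  sing_atomic : μ.singularPart volume = ∑ j : Fin npp, μ {atom j} • Measure.dirac (atom j)
  atom_inj : Function.Injective atom
  atom_pos : ∀ j, 0 < μ {atom j}
  lt : ∀ j, Em j < Ep j
  ordered : ∀ i j : Fin nac, i < j → Ep i < Em j
  supp_ac : msupp (acPart μ) = ⋃ j, Set.Icc (Em j) (Ep j)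
  out_card : Nat.card {j : Fin npp // atom j ∉ msupp (acPart μ)} = nppout
  no_atom_endpoint : ∀ j i, atom j ≠ Em i ∧ atom j ≠ Ep i
  power_law : ∀ j, ∃ tm tp C : ℝ, -1 < tm ∧ tm < 1 ∧ -1 < tp ∧ tp < 1 ∧ 1 ≤ C ∧
    ∀ᵐ x ∂volume, x ∈ Set.Icc (Em j) (Ep j) →
      C⁻¹ < ρ x / ((x - Em j) ^ tm * (Ep j - x) ^ tp) ∧
      ρ x / ((x - Em j) ^ tm * (Ep j - x) ^ tp) < C

/-- The subordination function `ω_t` for the free convolution semi-group,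
together with its continuous extension to `ℂ⁺ ∪ ℝ`. -/
structure IsSubordT (μ : Measure ℝ) (t : ℝ) (ω : ℂ → ℂ) : Prop where
  diff : DifferentiableOn ℂ ω UHP
  maps : ∀ z ∈ UHP, ω z ∈ UHP
  imLe : ∀ z ∈ UHP, z.im ≤ (ω z).im
  limTop : Tendsto (fun η : ℝ => ω ((η : ℂ) * Complex.I) / ((η : ℂ) * Complex.I))
      atTop (𝓝 1)
  eqn : ∀ z ∈ UHP, (t : ℂ) * ω z - z = ((t : ℂ) - 1) * nrT μ (ω z)
  cont : ContinuousOn ω CUHP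

/-- `μt = μ^{⊞ t}`: the probability measure whose negative reciprocal Cauchy–Stieltjes
transform is `F_μ ∘ ω_t`, i.e. whose Cauchy–Stieltjes transform is `m_μ ∘ ω_t`. -/
def IsFreePow (μ : Measure ℝ) (ω : ℂ → ℂ) (μt : Measure ℝ) : Prop :=
  IsProbabilityMeasure μt ∧ ∀ z ∈ UHP, stT μt z = stT μ (ω z)

/-- Assumption 2 (for one of the two measures). -/
structure Assumption2 (μ : Measure ℝ) (n : ℕ) (Am Ap : Fin n → ℝ) (ρ : ℝ → ℝ) : Prop where
  prob : IsProbabilityMeasure μ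
  n_pos : 1 ≤ n
  centered : ∫ x, x ∂μ = 0
  ρ_nonneg : ∀ x, 0 ≤ ρ x
  ac : μ = volume.withDensity fun x => ENNReal.ofReal (ρ x)
  lt : ∀ j, Am j < Ap j
  ordered : ∀ i j : Fin n, i < j → Ap i < Am j
  supp_eq : msupp μ = ⋃ j, Set.Icc (Am j) (Ap j)
  power_law : ∀ j, ∃ sm sp C : ℝ, -1 < sm ∧ sm < 1 ∧ -1 < sp ∧ sp < 1 ∧ 1 ≤ C ∧
    ∀ᵐ x ∂volume, x ∈ Set.Icc (Am j) (Ap j) →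
      C⁻¹ < ρ x / ((x - Am j) ^ sm * (Ap j - x) ^ sp) ∧
      ρ x / ((x - Am j) ^ sm * (Ap j - x) ^ sp) < C

/-- The pair of subordination functions for the free additive convolution `μa ⊞ μb`. -/
structure IsSubordPair (μa μb : Measure ℝ) (ωa ωb : ℂ → ℂ) : Prop where
  diff_a : DifferentiableOn ℂ ωa UHP
  diff_b : DifferentiableOn ℂ ωb UHP
  maps_a : ∀ z ∈ UHP, ωa z ∈ UHP
  maps_b : ∀ z ∈ UHP, ωb z ∈ UHP
  imLe_a : ∀ z ∈ UHP, z.im ≤ (ωa z).im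
  imLe_b : ∀ z ∈ UHP, z.im ≤ (ωb z).im
  lim_a : Tendsto (fun η : ℝ => ωa ((η : ℂ) * Complex.I) / ((η : ℂ) * Complex.I))
      atTop (𝓝 1)
  lim_b : Tendsto (fun η : ℝ => ωb ((η : ℂ) * Complex.I) / ((η : ℂ) * Complex.I))
      atTop (𝓝 1)
  eqn_a : ∀ z ∈ UHP, ωa z + ωb z - z = nrT μa (ωb z)
  eqn_b : ∀ z ∈ UHP, ωa z + ωb z - z = nrT μb (ωa z)

/-- `μab = μa ⊞ μb`: the probability measure whose negative reciprocal Cauchy–Stieltjes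
transform is `F_{μa} ∘ ω_b`, i.e. whose Cauchy–Stieltjes transform is `m_{μa} ∘ ω_b`. -/
def IsFreeConv (μa μb : Measure ℝ) (ωb : ℂ → ℂ) (μab : Measure ℝ) : Prop :=
  IsProbabilityMeasure μab ∧ ∀ z ∈ UHP, stT μab z = stT μa (ωb z)

/-- `Ω` is the continuous extension of `ω` to `ℂ⁺ ∪ ℝ`, with values in the
Riemann sphere `ℂ ∪ {∞}`. -/
def ExtendsToRP (ω : ℂ → ℂ) (Ω : ℂ → OnePoint ℂ) : Prop :=
  ContinuousOn Ω CUHP ∧ ∀ z ∈ UHP, Ω z = (ω z : OnePoint ℂ)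

/-- `μhat` is the measure in the Nevanlinna representation
`F_μ(ω) − ω = −∫ x dμ + ∫ 1/(x−ω) dμ̂(x)`. -/
def IsNevanHat (μ μhat : Measure ℝ) : Prop :=
  IsFiniteMeasure μhat ∧ ∀ z ∈ UHP,
    nrT μ z - z = -((∫ x, x ∂μ : ℝ) : ℂ) + ∫ x, ((x : ℂ) - z)⁻¹ ∂μhat

end

/-!
The subordination function `ω = ω_t` is a right inverse of `Φ(z) = t z - (t - 1) F_μ(z)`, extended
to the real line. Inserting `F_μ(ω) = (t ω - z) / (t - 1)` into `m_{μ^{⊞t}} = -1 / F_μ(ω)` shows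
that the density of `μ^{⊞t}` at `e` is a multiple of `Im ω(e) / |t ω(e) - e|²`. It vanishes
exactly where `ω` is real and `t ω(e) ≠ e`, and diverges exactly where `t ω(e) = e`; the latter
means `e = t w` for an atom `w` of `μ` with `μ {w} ≥ 1 - 1/t`, and then `e` has `μ^{⊞t}`-mass
`t μ {w} - (t - 1)`. This gives the count of divergence points.

Off the support of the a.c. part of `μ^{⊞t}`, and at the zeros of the density, `ω` is therefore
real and increasing, and it avoids the bands of `μ`: since `F_μ` has a finite angular derivative
at a real value `r` of `ω`, the integral `∫ (x - r)⁻² dμ(x)` is finite unless `r` is an atom,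
whereas it is infinite on the bands because the exponents are less than `1`. If `F_μ` were
analytic between the values of `ω` at two such points, then `ω` would be real in between and there
would be no density. So any two such points separated by a point of the support have the left
endpoint of a band or a zero of `m_μ` between their values. Components and zeros of the density
are thereby charged to distinct elements of a set of `n_ac + |𝒵_μ|` points. In the same way, as
`m_μ` increases between consecutive parts of the support, its zeros interlace with the bands and
the outer atoms.
-/

section Support

theorem msupp_eq_support (μ : Measure ℝ) : msupp μ = μ.support := by
  ext x
  exact ((nhds_basis_Ioo_pos x).mem_measureSupport).symm

variable {μ ν : Measure ℝ} {x : ℝ}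

theorem isClosed_msupp : IsClosed (msupp μ) := by
  rw [msupp_eq_support]
  exact Measure.isClosed_support

theorem ae_mem_msupp : ∀ᵐ x ∂μ, x ∈ msupp μ := by
  rw [msupp_eq_support]
  exact Measure.support_mem_ae

theorem notMem_msupp_iff : x ∉ msupp μ ↔ ∃ U ∈ 𝓝 x, μ U = 0 := by
  rw [msupp_eq_support]
  exact Measure.notMem_support_iff_exists

theorem msupp_mono (h : μ ≤ ν) : msupp μ ⊆ msupp ν := by
  simpa only [msupp_eq_support] using Measure.support_mono h

theorem mem_msupp_of_singleton_ne_zero (h : μ {x} ≠ 0) : x ∈ msupp μ := by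
  by_contra hx
  obtain ⟨U, hU, hμU⟩ := notMem_msupp_iff.1 hx
  exact h (measure_mono_null (singleton_subset_iff.2 (mem_of_mem_nhds hU)) hμU)

theorem nonempty_msupp [NeZero μ] : (msupp μ).Nonempty :=
  (ae_mem_msupp (μ := μ)).exists

theorem acPart_absolutelyContinuous (μ : Measure ℝ) : acPart μ ≪ volume :=
  withDensity_absolutelyContinuous _ _

theorem acPart_le (μ : Measure ℝ) : acPart μ ≤ μ :=
  Measure.withDensity_rnDeriv_le μ volume

theorem msupp_acPart_subset (μ : Measure ℝ) : msupp (acPart μ) ⊆ msupp μ :=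
  msupp_mono (acPart_le μ)

theorem singularPart_add_acPart (μ : Measure ℝ) [SigmaFinite μ] :
    μ.singularPart volume + acPart μ = μ :=
  Measure.singularPart_add_rnDeriv μ volume

theorem measure_eq_zero_of_singularPart_of_acPart [SigmaFinite μ] {s : Set ℝ}
    (hsing : μ.singularPart volume s = 0) (hac : acPart μ s = 0) : μ s = 0 := by
  rw [← singularPart_add_acPart μ, Measure.add_apply, hsing, hac, add_zero]

instance isFiniteMeasure_acPart [IsFiniteMeasure μ] : IsFiniteMeasure (acPart μ) :=
  isFiniteMeasure_of_le μ (acPart_le μ)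

end Support

section CauchyTransform

open Complex (ofReal)

variable {μ : Measure ℝ} {z w : ℂ} {r : ℝ}

theorem isClosed_ofReal_image_msupp : IsClosed (ofReal '' msupp μ) :=
  Complex.isometry_ofReal.isClosedEmbedding.isClosedMap _ isClosed_msupp

theorem ofReal_mem_image_msupp : (r : ℂ) ∈ ofReal '' msupp μ ↔ r ∈ msupp μ :=
  Complex.ofReal_injective.mem_set_image

theorem notMem_image_msupp_of_im_pos (hz : 0 < z.im) : z ∉ ofReal '' msupp μ := by
  rintro ⟨x, -, rfl⟩
  exact hz.ne' (Complex.ofReal_im x)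

theorem exists_ae_forall_ball_le_norm_sub (hz : z ∉ ofReal '' msupp μ) :
    ∃ δ > 0, ∀ᵐ x : ℝ ∂μ, ∀ w ∈ Metric.ball z δ, δ ≤ ‖(x : ℂ) - w‖ := by
  obtain ⟨ε, hε, hball⟩ :=
    Metric.mem_nhds_iff.1 (isClosed_ofReal_image_msupp.isOpen_compl.mem_nhds hz)
  refine ⟨ε / 2, half_pos hε, ?_⟩
  filter_upwards [ae_mem_msupp (μ := μ)] with x hx w hw
  by_contra! hlt
  refine hball ?_ ⟨x, hx, rfl⟩
  rw [← dist_eq_norm] at hlt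
  rw [Metric.mem_ball] at hw ⊢
  linarith [dist_triangle (x : ℂ) w z]

theorem exists_ae_le_norm_sub (hz : z ∉ ofReal '' msupp μ) :
    ∃ δ > 0, ∀ᵐ x : ℝ ∂μ, δ ≤ ‖(x : ℂ) - z‖ := by
  obtain ⟨δ, hδ, h⟩ := exists_ae_forall_ball_le_norm_sub hz
  exact ⟨δ, hδ, h.mono fun x hx => hx z (Metric.mem_ball_self hδ)⟩

theorem stT_ofReal (μ : Measure ℝ) (r : ℝ) : stT μ r = (stTR μ r : ℂ) := by
  rw [stT, stTR, ← integral_complex_ofReal]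
  push_cast
  rfl

variable [IsFiniteMeasure μ]

theorem integrable_inv_sub_mul_inv_sub (hz : z ∉ ofReal '' msupp μ)
    (hw : w ∉ ofReal '' msupp μ) :
    Integrable (fun x : ℝ => ((x : ℂ) - z)⁻¹ * ((x : ℂ) - w)⁻¹) μ := by
  obtain ⟨δ, hδ, hδz⟩ := exists_ae_le_norm_sub hz
  obtain ⟨ε, hε, hεw⟩ := exists_ae_le_norm_sub hw
  refine .of_bound (by fun_prop) (δ⁻¹ * ε⁻¹) ?_
  filter_upwards [hδz, hεw] with x hxz hxw
  rw [norm_mul, norm_inv, norm_inv]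
  gcongr

theorem integrable_inv_sub (hz : z ∉ ofReal '' msupp μ) :
    Integrable (fun x : ℝ => ((x : ℂ) - z)⁻¹) μ := by
  obtain ⟨δ, hδ, hδz⟩ := exists_ae_le_norm_sub hz
  refine .of_bound (by fun_prop) δ⁻¹ ?_
  filter_upwards [hδz] with x hx
  rw [norm_inv]
  gcongr

theorem integrable_inv_normSq (hz : z ∉ ofReal '' msupp μ) :
    Integrable (fun x : ℝ => (Complex.normSq ((x : ℂ) - z))⁻¹) μ := by
  refine (integrable_inv_sub_mul_inv_sub hz hz).norm.congr (.of_forall fun x => ?_)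
  simp only [norm_mul, norm_inv, Complex.normSq_eq_norm_sq, sq, mul_inv]

theorem hasDerivAt_stT (hz : z ∉ ofReal '' msupp μ) :
    HasDerivAt (stT μ) (∫ x, (((x : ℂ) - z) ^ 2)⁻¹ ∂μ) z := by
  obtain ⟨δ, hδ, hball⟩ := exists_ae_forall_ball_le_norm_sub hz
  refine (hasDerivAt_integral_of_dominated_loc_of_deriv_le
    (F := fun w (x : ℝ) => ((x : ℂ) - w)⁻¹) (F' := fun w (x : ℝ) => (((x : ℂ) - w) ^ 2)⁻¹)
    (bound := fun _ => (δ ^ 2)⁻¹) (Metric.ball_mem_nhds z hδ) (.of_forall fun w => by fun_prop)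
    (integrable_inv_sub hz) (by fun_prop) ?_ (integrable_const _) ?_).2
  · filter_upwards [hball] with x hx w hw
    rw [norm_inv, norm_pow]
    gcongr
    exact hx w hw
  · filter_upwards [hball] with x hx w hw
    have hne : (x : ℂ) - w ≠ 0 := norm_pos_iff.1 (hδ.trans_le (hx w hw))
    simpa [neg_div] using ((hasDerivAt_id w).const_sub (x : ℂ)).fun_inv hne

theorem analyticAt_stT (hz : z ∉ ofReal '' msupp μ) : AnalyticAt ℂ (stT μ) z := by
  refine Complex.analyticAt_iff_eventually_differentiableAt.2 ?_
  filter_upwards [isClosed_ofReal_image_msupp.isOpen_compl.mem_nhds hz] with w hw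
  exact (hasDerivAt_stT hw).differentiableAt

theorem stT_sub (hz : z ∉ ofReal '' msupp μ) (hw : w ∉ ofReal '' msupp μ) :
    stT μ z - stT μ w = (z - w) * ∫ x, ((x : ℂ) - z)⁻¹ * ((x : ℂ) - w)⁻¹ ∂μ := by
  rw [stT, stT, ← integral_sub (integrable_inv_sub hz) (integrable_inv_sub hw),
    ← integral_const_mul]
  refine integral_congr_ae ?_
  filter_upwards [ae_mem_msupp (μ := μ)] with x hx
  have hxz : (x : ℂ) - z ≠ 0 := sub_ne_zero.2 fun h => hz ⟨x, hx, h⟩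
  have hxw : (x : ℂ) - w ≠ 0 := sub_ne_zero.2 fun h => hw ⟨x, hx, h⟩
  field_simp
  ring

theorem im_stT (hz : 0 < z.im) : (stT μ z).im = z.im * Ifun μ z := by
  have h := integral_im (𝕜 := ℂ) (integrable_inv_sub (notMem_image_msupp_of_im_pos (μ := μ) hz))
  simp only [RCLike.im_to_complex] at h
  rw [stT, Ifun, ← h, ← integral_const_mul]
  refine integral_congr_ae (.of_forall fun x => ?_)
  simp [Complex.inv_im, div_eq_mul_inv]

theorem Ifun_pos [NeZero μ] (hz : 0 < z.im) : 0 < Ifun μ z := by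
  have hne : ∀ x : ℝ, 0 < Complex.normSq ((x : ℂ) - z) := fun x =>
    Complex.normSq_pos.2 (sub_ne_zero.2 fun h => hz.ne' (by rw [← h, Complex.ofReal_im]))
  rw [Ifun, integral_pos_iff_support_of_nonneg (fun x => inv_nonneg.2 (hne x).le)
    (integrable_inv_normSq (notMem_image_msupp_of_im_pos hz))]
  have hsupp : Function.support (fun x : ℝ => (Complex.normSq ((x : ℂ) - z))⁻¹) = univ :=
    eq_univ_of_forall fun x => inv_ne_zero (hne x).ne'
  rw [hsupp]
  exact (NeZero.ne (μ univ)).bot_lt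

theorem im_stT_pos [NeZero μ] (hz : 0 < z.im) : 0 < (stT μ z).im := by
  rw [im_stT hz]
  exact mul_pos hz (Ifun_pos hz)

theorem stT_ne_zero [NeZero μ] (hz : 0 < z.im) : stT μ z ≠ 0 := fun h =>
  (im_stT_pos hz).ne' (by rw [h, Complex.zero_im])

/-- The Cauchy–Schwarz inequality in `L²(μ)`. -/
theorem norm_stT_sub_sq_le (hz : 0 < z.im) (hw : 0 < w.im) :
    ‖stT μ z - stT μ w‖ ^ 2 ≤ ‖z - w‖ ^ 2 * (Ifun μ z * Ifun μ w) := by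
  have hz' := notMem_image_msupp_of_im_pos (μ := μ) hz
  have hw' := notMem_image_msupp_of_im_pos (μ := μ) hw
  have hmem : ∀ {v : ℂ}, v ∉ ofReal '' msupp μ →
      MemLp (fun x : ℝ => ((x : ℂ) - v)⁻¹) (ENNReal.ofReal 2) μ := fun hv => by
    rw [ENNReal.ofReal_ofNat]
    refine (memLp_two_iff_integrable_sq_norm (by fun_prop)).2 ?_
    simpa only [norm_inv, inv_pow, ← Complex.normSq_eq_norm_sq] using integrable_inv_normSq hv
  have hL2 : ∀ v : ℂ, ∫ x : ℝ, ‖((x : ℂ) - v)⁻¹‖ ^ (2 : ℝ) ∂μ = Ifun μ v := fun v => by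
    simp only [Real.rpow_two, norm_inv, inv_pow, ← Complex.normSq_eq_norm_sq, Ifun]
  have hI : ∀ v : ℂ, 0 ≤ Ifun μ v := fun v =>
    integral_nonneg fun x => inv_nonneg.2 (Complex.normSq_nonneg _)
  have hCS := integral_mul_norm_le_Lp_mul_Lq Real.HolderConjugate.two_two (hmem hz') (hmem hw')
  rw [hL2, hL2, ← Real.mul_rpow (hI z) (hI w), ← Real.sqrt_eq_rpow] at hCS
  rw [stT_sub hz' hw', norm_mul, mul_pow]
  gcongr
  calc ‖∫ x : ℝ, ((x : ℂ) - z)⁻¹ * ((x : ℂ) - w)⁻¹ ∂μ‖ ^ 2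
      ≤ (∫ x : ℝ, ‖((x : ℂ) - z)⁻¹‖ * ‖((x : ℂ) - w)⁻¹‖ ∂μ) ^ 2 := by
        gcongr
        simpa only [norm_mul] using
          norm_integral_le_integral_norm (μ := μ) fun x : ℝ => ((x : ℂ) - z)⁻¹ * ((x : ℂ) - w)⁻¹
    _ ≤ √(Ifun μ z * Ifun μ w) ^ 2 := by gcongr
    _ = Ifun μ z * Ifun μ w := Real.sq_sqrt (mul_nonneg (hI z) (hI w))

theorem stT_eq_add_restrict_compl_singleton (hz : z ∉ ofReal '' msupp μ) (r : ℝ) :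
    stT μ z = μ.real {r} * ((r : ℂ) - z)⁻¹ + stT (μ.restrict {r}ᶜ) z := by
  rw [stT, ← integral_add_compl (measurableSet_singleton r) (integrable_inv_sub hz),
    integral_singleton, Complex.real_smul, stT]

theorem im_stT_nonneg (hz : 0 < z.im) : 0 ≤ (stT μ z).im := by
  rw [im_stT hz]
  exact mul_nonneg hz.le (integral_nonneg fun x => inv_nonneg.2 (Complex.normSq_nonneg _))

theorem im_stT_eq_add_restrict_compl_singleton (hz : 0 < z.im) (r : ℝ) :
    (stT μ z).im = μ.real {r} * (z.im / Complex.normSq (z - r)) +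
      (stT (μ.restrict {r}ᶜ) z).im := by
  rw [stT_eq_add_restrict_compl_singleton (notMem_image_msupp_of_im_pos hz) r, Complex.add_im,
    Complex.im_ofReal_mul, Complex.inv_im, Complex.sub_im, Complex.ofReal_im, zero_sub, neg_neg,
    ← Complex.normSq_neg, neg_sub]

theorem singleton_mul_im_div_normSq_le_im_stT (hz : 0 < z.im) (r : ℝ) :
    μ.real {r} * (z.im / Complex.normSq (z - r)) ≤ (stT μ z).im := by
  rw [im_stT_eq_add_restrict_compl_singleton hz r]
  exact le_add_of_nonneg_right (im_stT_nonneg hz)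

theorem singleton_mul_im_div_normSq_lt_im_stT (hr : μ {r}ᶜ ≠ 0) (hz : 0 < z.im) :
    μ.real {r} * (z.im / Complex.normSq (z - r)) < (stT μ z).im := by
  have : NeZero (μ.restrict {r}ᶜ) := ⟨Measure.restrict_eq_zero.not.2 hr⟩
  rw [im_stT_eq_add_restrict_compl_singleton hz r]
  exact lt_add_of_pos_right _ (im_stT_pos hz)

/-- Dominated convergence along a non-tangential approach to `r`. -/
theorem tendsto_mul_stT_of_nontangential {ι : Type*} {l : Filter ι} [l.IsCountablyGenerated]
    {u : ι → ℂ} {C : ℝ} (hu : Tendsto u l (𝓝 0)) (hpos : ∀ᶠ i in l, 0 < (u i).im)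
    (hnt : ∀ᶠ i in l, ‖u i‖ ≤ C * (u i).im) (r : ℝ) :
    Tendsto (fun i => u i * stT μ (r + u i)) l (𝓝 (-(μ.real {r} : ℂ))) := by
  have hlim : (-(μ.real {r} : ℂ)) = ∫ x : ℝ, ({r} : Set ℝ).indicator (fun _ => (-1 : ℂ)) x ∂μ := by
    rw [integral_indicator (measurableSet_singleton r)]
    simp [Measure.real]
  simp only [hlim, stT, ← integral_const_mul]
  refine tendsto_integral_filter_of_dominated_convergence (fun _ => C)
    (.of_forall fun i => by fun_prop) ?_ (integrable_const _) (.of_forall fun x => ?_)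
  · filter_upwards [hpos, hnt] with i him hi
    refine .of_forall fun x => ?_
    have hle : (u i).im ≤ ‖(x : ℂ) - (r + u i)‖ := by
      simpa using (neg_le_abs _).trans (Complex.abs_im_le_norm ((x : ℂ) - (r + u i)))
    have hC : 0 ≤ C := le_of_mul_le_mul_right (by simpa using (norm_nonneg _).trans hi) him
    rw [norm_mul, norm_inv, ← div_eq_mul_inv, div_le_iff₀ (him.trans_le hle)]
    exact hi.trans (mul_le_mul_of_nonneg_left hle hC)
  · obtain rfl | hx := eq_or_ne x r
    · simp only [mem_singleton_iff, indicator_of_mem]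
      refine tendsto_const_nhds.congr' ?_
      filter_upwards [hpos] with i him
      have hne : u i ≠ 0 := fun h => him.ne' (by rw [h, Complex.zero_im])
      rw [sub_add_cancel_left, inv_neg, mul_neg, mul_inv_cancel₀ hne]
    · rw [indicator_of_notMem (by simpa using hx)]
      have hden : Tendsto (fun i => (x : ℂ) - (r + u i)) l (𝓝 ((x : ℂ) - (r + 0))) :=
        tendsto_const_nhds.sub (tendsto_const_nhds.add hu)
      simpa using hu.mul (hden.inv₀ (by simpa [sub_eq_zero] using hx))

end CauchyTransform

section NegReciprocal

open Complex (ofReal I)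

variable {μ : Measure ℝ} {z w : ℂ} {r y η : ℝ}

theorem im_ofReal_add_mul_I_pos (r : ℝ) (hη : 0 < η) : 0 < ((r : ℂ) + η * I).im := by
  simpa using hη

theorem im_div_normSq_ofReal_add_mul_I_sub (r η : ℝ) :
    ((r : ℂ) + η * I).im / Complex.normSq ((r : ℂ) + η * I - r) = η⁻¹ := by
  simp [div_self_mul_self']

theorem tendsto_ofReal_add_mul_I (r : ℝ) :
    Tendsto (fun η : ℝ => (r : ℂ) + η * I) (𝓝[>] 0) (𝓝[UHP] r) := by
  refine tendsto_nhdsWithin_iff.2 ⟨?_, ?_⟩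
  · have hcont : Continuous fun η : ℝ => (r : ℂ) + η * I := by fun_prop
    simpa using (hcont.tendsto 0).mono_left nhdsWithin_le_nhds
  · filter_upwards [self_mem_nhdsWithin] with η hη
    exact im_ofReal_add_mul_I_pos r hη

instance nhdsWithin_UHP_neBot (r : ℝ) : NeBot (𝓝[UHP] (r : ℂ)) :=
  (tendsto_ofReal_add_mul_I r).neBot

theorem tendsto_mul_I_mul_stT [IsFiniteMeasure μ] (r : ℝ) :
    Tendsto (fun η : ℝ => (η * I) * stT μ (r + η * I)) (𝓝[>] 0) (𝓝 (-(μ.real {r} : ℂ))) := by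
  refine tendsto_mul_stT_of_nontangential (C := 1) ?_ ?_ ?_ r
  · simpa using ((tendsto_ofReal_add_mul_I 0).mono_right nhdsWithin_le_nhds)
  · filter_upwards [self_mem_nhdsWithin] with η hη
    simpa using hη
  · filter_upwards [self_mem_nhdsWithin] with η hη
    simp [abs_of_pos (mem_Ioi.1 hη)]

theorem im_nrT (μ : Measure ℝ) (z : ℂ) :
    (nrT μ z).im = (stT μ z).im / ‖stT μ z‖ ^ 2 := by
  rw [nrT, Complex.neg_im, Complex.inv_im, neg_div, neg_neg, Complex.normSq_eq_norm_sq]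

variable [IsFiniteMeasure μ] [NeZero μ]

theorem im_nrT_pos (hz : 0 < z.im) : 0 < (nrT μ z).im := by
  rw [im_nrT]
  exact div_pos (im_stT_pos hz) (pow_pos (norm_pos_iff.2 (stT_ne_zero hz)) 2)

/-- The Schwarz–Pick inequality for the self-map `F_μ` of the upper half-plane. -/
theorem norm_nrT_sub_sq_mul_le (hz : 0 < z.im) (hw : 0 < w.im) :
    ‖nrT μ z - nrT μ w‖ ^ 2 * (z.im * w.im) ≤
      ‖z - w‖ ^ 2 * ((nrT μ z).im * (nrT μ w).im) := by
  have hz0 : stT μ z ≠ 0 := stT_ne_zero hz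
  have hw0 : stT μ w ≠ 0 := stT_ne_zero hw
  have hsub : nrT μ z - nrT μ w = (stT μ z - stT μ w) / (stT μ z * stT μ w) := by
    rw [nrT, nrT]
    field_simp
    ring
  rw [hsub, norm_div, norm_mul, div_pow, mul_pow, im_nrT, im_nrT, im_stT hz, im_stT hw,
    div_mul_div_comm, ← mul_div_assoc, div_mul_eq_mul_div]
  refine div_le_div_of_nonneg_right ?_ (by positivity)
  calc ‖stT μ z - stT μ w‖ ^ 2 * (z.im * w.im)
      ≤ ‖z - w‖ ^ 2 * (Ifun μ z * Ifun μ w) * (z.im * w.im) :=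
        mul_le_mul_of_nonneg_right (norm_stT_sub_sq_le hz hw) (mul_pos hz hw).le
    _ = ‖z - w‖ ^ 2 * (z.im * Ifun μ z * (w.im * Ifun μ w)) := by ring

theorem norm_mul_nrT_sub_sq_mul_le (c : ℝ) (hz : 0 < z.im) (hw : 0 < w.im) :
    ‖c * nrT μ z - c * nrT μ w‖ ^ 2 * (z.im * w.im) ≤
      ‖z - w‖ ^ 2 * (c * (nrT μ z).im * (c * (nrT μ w).im)) := by
  rw [← mul_sub, norm_mul, mul_pow, Complex.norm_real, Real.norm_eq_abs, sq_abs]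
  linarith [mul_le_mul_of_nonneg_left (norm_nrT_sub_sq_mul_le (μ := μ) hz hw) (sq_nonneg c)]

theorem singleton_mul_norm_nrT_le (r : ℝ) (hη : 0 < η) :
    μ.real {r} * ‖nrT μ (r + η * I)‖ ≤ η := by
  have him := im_ofReal_add_mul_I_pos r hη
  have hle : μ.real {r} / η ≤ ‖stT μ (r + η * I)‖ := by
    rw [div_eq_mul_inv, ← im_div_normSq_ofReal_add_mul_I_sub r η]
    exact (singleton_mul_im_div_normSq_le_im_stT him r).trans
      ((le_abs_self _).trans (Complex.abs_im_le_norm _))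
  rwa [nrT, norm_neg, norm_inv, ← div_eq_mul_inv,
    div_le_iff₀ (norm_pos_iff.2 (stT_ne_zero him)), ← div_le_iff₀' hη]

theorem tendsto_nrT_zero_of_singleton_ne_zero (hr : μ {r} ≠ 0) :
    Tendsto (fun η : ℝ => nrT μ (r + η * I)) (𝓝[>] 0) (𝓝 0) := by
  have hp : 0 < μ.real {r} := ENNReal.toReal_pos hr (measure_ne_top _ _)
  refine squeeze_zero_norm' (a := fun η => η / μ.real {r}) ?_ ?_
  · filter_upwards [self_mem_nhdsWithin] with η hη
    exact (le_div_iff₀' hp).2 (singleton_mul_norm_nrT_le r hη)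
  · simpa using (tendsto_id (x := 𝓝 (0 : ℝ))).div_const (μ.real {r}) |>.mono_left
      nhdsWithin_le_nhds

theorem singleton_mul_im_nrT_lt (hr : μ {r}ᶜ ≠ 0) (hη : 0 < η) :
    μ.real {r} * (nrT μ (r + η * I)).im < η := by
  have him := im_ofReal_add_mul_I_pos r hη
  have hlt : μ.real {r} / η < (stT μ (r + η * I)).im := by
    rw [div_eq_mul_inv, ← im_div_normSq_ofReal_add_mul_I_sub r η]
    exact singleton_mul_im_div_normSq_lt_im_stT hr him
  have hF : (nrT μ (r + η * I)).im * (stT μ (r + η * I)).im ≤ 1 := by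
    rw [im_nrT, div_mul_eq_mul_div, ← sq, ← Complex.sq_norm_sub_sq_re]
    exact div_le_one_of_le₀ (sub_le_self _ (sq_nonneg _)) (sq_nonneg _)
  calc μ.real {r} * (nrT μ (r + η * I)).im
      < η * (stT μ (r + η * I)).im * (nrT μ (r + η * I)).im :=
        mul_lt_mul_of_pos_right ((div_lt_iff₀' hη).1 hlt) (im_nrT_pos him)
    _ = η * ((nrT μ (r + η * I)).im * (stT μ (r + η * I)).im) := by ring
    _ ≤ η := mul_le_of_le_one_right hη.le hF

end NegReciprocal

section Subordination

open Complex (I)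

variable {μ : Measure ℝ} {t : ℝ} {ω : ℂ → ℂ} {z w : ℂ} {e e' r r' η : ℝ}

/-- The continuous extension of `F_μ` to the real points off the support of the rest of `μ`: at an
atom `r` the value of `F_μ` is `0`, whereas `nrT μ r` is computed from the junk value
`(r - r)⁻¹ = 0` of the integrand. -/
noncomputable def nrTExt (μ : Measure ℝ) (z : ℂ) : ℂ :=
  open Classical in if z.im = 0 ∧ μ {z.re} ≠ 0 then 0 else nrT μ z

/-- The map `Φ(z) = t z - (t - 1) F_μ(z)`, of which the subordination function `ω_t` is a right
inverse on the upper half-plane. -/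
noncomputable def subordInv (μ : Measure ℝ) (t : ℝ) (z : ℂ) : ℂ :=
  t * z - (t - 1) * nrTExt μ z

theorem nrTExt_of_im_pos (μ : Measure ℝ) (hz : 0 < z.im) : nrTExt μ z = nrT μ z :=
  if_neg fun h => hz.ne' h.1

theorem nrTExt_of_singleton_ne_zero (hr : μ {r} ≠ 0) : nrTExt μ r = 0 :=
  if_pos ⟨Complex.ofReal_im r, hr⟩

theorem nrTExt_of_singleton_eq_zero (hr : μ {r} = 0) : nrTExt μ r = nrT μ r :=
  if_neg fun h => h.2 hr

theorem subordInv_of_im_pos (μ : Measure ℝ) (t : ℝ) (hz : 0 < z.im) :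
    subordInv μ t z = t * z - (t - 1) * nrT μ z := by
  rw [subordInv, nrTExt_of_im_pos μ hz]

theorem im_subordInv (μ : Measure ℝ) (t : ℝ) (hz : 0 < z.im) :
    (subordInv μ t z).im = t * z.im - (t - 1) * (nrT μ z).im := by
  rw [subordInv_of_im_pos μ t hz, ← Complex.ofReal_one, ← Complex.ofReal_sub, Complex.sub_im,
    Complex.im_ofReal_mul, Complex.im_ofReal_mul]

namespace IsSubordT

variable (hω : IsSubordT μ t ω)
include hω

theorem tendsto (hz : 0 ≤ z.im) : Tendsto ω (𝓝[UHP] z) (𝓝 (ω z)) := by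
  have hcont : ContinuousWithinAt ω CUHP z := hω.cont z hz
  have hsub : UHP ⊆ CUHP := fun w (hw : 0 < w.im) => hw.le
  exact hcont.mono_left (nhdsWithin_mono z hsub)

theorem subordInv_apply (hz : 0 < z.im) : subordInv μ t (ω z) = z := by
  rw [subordInv_of_im_pos μ t (hω.maps z hz), ← hω.eqn z hz, sub_sub_cancel]

theorem sub_one_mul_im_nrT (hz : 0 < z.im) :
    (t - 1) * (nrT μ (ω z)).im = t * (ω z).im - z.im := by
  linarith [im_subordInv μ t (hω.maps z hz), congrArg Complex.im (hω.subordInv_apply hz)]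

variable [IsFiniteMeasure μ] [NeZero μ] (ht : 1 < t)

theorem stT_mul (hz : 0 < z.im) : stT μ (ω z) * (t * ω z - z) = 1 - t := by
  rw [hω.eqn z hz, nrT]
  have hne : stT μ (ω z) ≠ 0 := stT_ne_zero (hω.maps z hz)
  field_simp
  ring

include ht

theorem apply_subordInv (hv : 0 < w.im) (hpos : 0 < (subordInv μ t w).im) :
    ω (subordInv μ t w) = w := by
  set z := subordInv μ t w with hz
  have hωz : 0 < (ω z).im := hω.maps z hpos
  have hF : ((t : ℂ) - 1) * nrT μ (ω z) - (t - 1) * nrT μ w = t * (ω z - w) := by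
    rw [subordInv_of_im_pos μ t hv] at hz
    linear_combination -hz - hω.eqn z hpos
  have him : (t - 1) * (nrT μ (ω z)).im < t * (ω z).im := by
    linarith [hω.sub_one_mul_im_nrT hpos]
  have himw : (t - 1) * (nrT μ w).im < t * w.im := by linarith [im_subordInv μ t hv]
  have hSP := norm_mul_nrT_sub_sq_mul_le (t - 1) (μ := μ) hωz hv
  push_cast at hSP
  rw [hF, norm_mul, Complex.norm_real, mul_pow, Real.norm_eq_abs, sq_abs] at hSP
  by_contra hne
  have hd : 0 < ‖ω z - w‖ ^ 2 := pow_pos (norm_pos_iff.2 (sub_ne_zero.2 hne)) 2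
  have hlt := mul_lt_mul_of_pos_left (mul_lt_mul'' him himw
    (mul_pos (sub_pos.2 ht) (im_nrT_pos hωz)).le (mul_pos (sub_pos.2 ht) (im_nrT_pos hv)).le) hd
  linarith

theorem apply_ofReal_of_tendsto_subordInv
    (hlim : Tendsto (fun η : ℝ => subordInv μ t (r + η * I)) (𝓝[>] 0) (𝓝 e))
    (hpos : ∀ᶠ η : ℝ in 𝓝[>] 0, 0 < (subordInv μ t (r + η * I)).im) : ω e = r := by
  have hω_lim := (hω.tendsto (Complex.ofReal_im e).ge).comp
    (tendsto_nhdsWithin_iff.2 ⟨hlim, hpos⟩)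
  refine tendsto_nhds_unique (hω_lim.congr' ?_)
    ((tendsto_ofReal_add_mul_I r).mono_right nhdsWithin_le_nhds)
  filter_upwards [hpos, self_mem_nhdsWithin] with η hη hη0
  exact hω.apply_subordInv ht (im_ofReal_add_mul_I_pos r hη0) hη

/-- The Schwarz–Pick inequality between `v` and `ω z`, in the limit `z → e`. -/
theorem norm_sub_one_mul_nrT_sub_sq_le (e : ℝ) {v : ℂ} (hv : 0 < v.im) :
    ‖((t : ℂ) - 1) * nrT μ v - (t * ω e - e)‖ ^ 2 * v.im ≤
      ‖v - ω e‖ ^ 2 * (t * ((t - 1) * (nrT μ v).im)) := by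
  have hω_lim := hω.tendsto (Complex.ofReal_im e).ge
  have hid : Tendsto (fun z : ℂ => z) (𝓝[UHP] e) (𝓝 e) := nhdsWithin_le_nhds
  refine le_of_tendsto_of_tendsto
    (((tendsto_const_nhds.sub ((hω_lim.const_mul (t : ℂ)).sub hid)).norm.pow 2).mul_const _)
    (((tendsto_const_nhds.sub hω_lim).norm.pow 2).mul_const _)
    (eventually_nhdsWithin_of_forall fun z hz => ?_)
  have hωz : 0 < (ω z).im := hω.maps z hz
  have him : (t - 1) * (nrT μ (ω z)).im ≤ t * (ω z).im := by
    linarith [hω.sub_one_mul_im_nrT hz, show 0 < z.im from hz]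
  have hSP := norm_mul_nrT_sub_sq_mul_le (t - 1) (μ := μ) hv hωz
  push_cast at hSP
  rw [← hω.eqn z hz] at hSP
  refine le_of_mul_le_mul_right ?_ hωz
  calc ‖((t : ℂ) - 1) * nrT μ v - (t * ω z - z)‖ ^ 2 * v.im * (ω z).im
      ≤ ‖v - ω z‖ ^ 2 * ((t - 1) * (nrT μ v).im * ((t - 1) * (nrT μ (ω z)).im)) := by
        rwa [mul_assoc]
    _ ≤ ‖v - ω z‖ ^ 2 * ((t - 1) * (nrT μ v).im * (t * (ω z).im)) := by
        have := mul_pos (sub_pos.2 ht) (im_nrT_pos (μ := μ) hv)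
        gcongr
    _ = ‖v - ω z‖ ^ 2 * (t * ((t - 1) * (nrT μ v).im)) * (ω z).im := by ring

theorem norm_sub_one_mul_nrT_sub_le (hr : ω e = r) (hη : 0 < η) :
    ‖((t : ℂ) - 1) * nrT μ (r + η * I) - (t * r - e)‖ ≤ t * η := by
  have h := hω.norm_sub_one_mul_nrT_sub_sq_le ht e (im_ofReal_add_mul_I_pos r hη)
  rw [hr] at h
  set N := ‖((t : ℂ) - 1) * nrT μ (r + η * I) - (t * r - e)‖
  have him : (t - 1) * (nrT μ (r + η * I)).im ≤ N := by
    simpa using (le_abs_self _).trans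
      (Complex.abs_im_le_norm (((t : ℂ) - 1) * nrT μ (r + η * I) - (t * r - e)))
  have hη_im : ((r : ℂ) + η * I).im = η := by simp
  have hη_norm : ‖(r : ℂ) + η * I - r‖ = η := by simp [abs_of_pos hη]
  rw [hη_im, hη_norm] at h
  by_contra! hN
  have hN0 : 0 < N := lt_of_le_of_lt (by positivity) hN
  have hle : N ^ 2 * η ≤ η ^ 2 * (t * N) :=
    h.trans (mul_le_mul_of_nonneg_left (mul_le_mul_of_nonneg_left him (by linarith)) (sq_nonneg _))
  nlinarith [mul_pos hN0 hη]

theorem tendsto_sub_one_mul_nrT (hr : ω e = r) :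
    Tendsto (fun η : ℝ => ((t : ℂ) - 1) * nrT μ (r + η * I)) (𝓝[>] 0) (𝓝 (t * r - e)) := by
  rw [tendsto_iff_norm_sub_tendsto_zero]
  refine squeeze_zero' (.of_forall fun _ => norm_nonneg _) (g := fun η => t * η) ?_ ?_
  · filter_upwards [self_mem_nhdsWithin] with η hη
    exact hω.norm_sub_one_mul_nrT_sub_le ht hr hη
  · simpa using ((tendsto_id (x := 𝓝 (0 : ℝ))).const_mul t).mono_left nhdsWithin_le_nhds

theorem tendsto_subordInv (hr : ω e = r) :
    Tendsto (fun η : ℝ => subordInv μ t (r + η * I)) (𝓝[>] 0) (𝓝 e) := by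
  have hlim := (((tendsto_ofReal_add_mul_I r).mono_right nhdsWithin_le_nhds).const_mul
    (t : ℂ)).sub (hω.tendsto_sub_one_mul_nrT ht hr)
  rw [sub_sub_cancel] at hlim
  refine hlim.congr' ?_
  filter_upwards [self_mem_nhdsWithin] with η hη
  rw [subordInv_of_im_pos μ t (im_ofReal_add_mul_I_pos r hη)]

theorem norm_mul_sub_sub_le (e e' : ℝ) : ‖(t * ω e - e) - (t * ω e' - e')‖ ≤ t * ‖ω e - ω e'‖ := by
  have hω_lim := hω.tendsto (Complex.ofReal_im e).ge
  have hid : Tendsto (fun z : ℂ => z) (𝓝[UHP] e) (𝓝 e) := nhdsWithin_le_nhds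
  refine le_of_tendsto_of_tendsto
    (((hω_lim.const_mul (t : ℂ)).sub hid).sub_const (t * ω e' - e')).norm
    ((hω_lim.sub_const (ω e')).norm.const_mul t)
    (eventually_nhdsWithin_of_forall fun z hz => ?_)
  have hωz : 0 < (ω z).im := hω.maps z hz
  have h := hω.norm_sub_one_mul_nrT_sub_sq_le ht e' hωz
  rw [← hω.eqn z hz] at h
  have him : (t - 1) * (nrT μ (ω z)).im ≤ t * (ω z).im := by
    linarith [hω.sub_one_mul_im_nrT hz, show 0 < z.im from hz]
  refine le_of_sq_le_sq (le_of_mul_le_mul_right ?_ hωz) (by positivity)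
  calc ‖t * ω z - z - (t * ω e' - e')‖ ^ 2 * (ω z).im
      ≤ ‖ω z - ω e'‖ ^ 2 * (t * ((t - 1) * (nrT μ (ω z)).im)) := h
    _ ≤ ‖ω z - ω e'‖ ^ 2 * (t * (t * (ω z).im)) := by gcongr
    _ = (t * ‖ω z - ω e'‖) ^ 2 * (ω z).im := by ring

theorem lt_of_apply_eq (hr : ω e = r) (hr' : ω e' = r') (hlt : e < e') : r < r' := by
  have h := hω.norm_mul_sub_sub_le ht e e'
  rw [hr, hr', show (t * r - e - (t * r' - e') : ℂ) = ((t * (r - r') + (e' - e) : ℝ) : ℂ) by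
    push_cast; ring, ← Complex.ofReal_sub, Complex.norm_real, Complex.norm_real,
    Real.norm_eq_abs, Real.norm_eq_abs] at h
  by_contra! hle
  rw [abs_of_pos (by nlinarith), abs_of_nonneg (sub_nonneg.2 hle)] at h
  linarith

end IsSubordT

end Subordination

section Atoms

open Complex (I)

variable {μ μt : Measure ℝ} {t : ℝ} {ω : ℂ → ℂ} {e r w η : ℝ}

namespace IsSubordT

section

variable (hω : IsSubordT μ t ω)
include hω

theorem im_apply_sub_ofReal_pos (e r : ℝ) (hη : 0 < η) : 0 < (ω (e + η * I) - r).im := by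
  rw [Complex.sub_im, Complex.ofReal_im, sub_zero]
  exact hω.maps _ (im_ofReal_add_mul_I_pos e hη)

theorem tendsto_apply_sub_of_apply_eq (hr : ω e = r) :
    Tendsto (fun η : ℝ => ω (e + η * I) - r) (𝓝[>] 0) (𝓝 0) := by
  have h := (((hω.tendsto (Complex.ofReal_im e).ge).comp
    (tendsto_ofReal_add_mul_I e)).sub_const (r : ℂ))
  rwa [hr, sub_self] at h

end

variable [IsFiniteMeasure μ] [NeZero μ] (hω : IsSubordT μ t ω) (ht : 1 < t)
include hω ht

theorem eq_mul_of_apply_eq_of_singleton_ne_zero (hr : ω e = r) (hμr : μ {r} ≠ 0) : e = t * r := by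
  have hF := (tendsto_nrT_zero_of_singleton_ne_zero hμr).const_mul ((t : ℂ) - 1)
  have h := tendsto_nhds_unique (hω.tendsto_sub_one_mul_nrT ht hr) hF
  rw [mul_zero, sub_eq_zero] at h
  exact_mod_cast h.symm

theorem sub_one_le_mul_singleton (hw : ω (t * w : ℝ) = w) : t - 1 ≤ t * μ.real {w} := by
  have hlim := ((tendsto_mul_I_mul_stT (μ := μ) w).norm).const_mul t
  rw [norm_neg, Complex.norm_real, Real.norm_of_nonneg measureReal_nonneg] at hlim
  refine ge_of_tendsto hlim ?_
  filter_upwards [self_mem_nhdsWithin] with η hη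
  have hm : 0 < ‖stT μ (w + η * I)‖ := norm_pos_iff.2 (stT_ne_zero (im_ofReal_add_mul_I_pos w hη))
  have hF := hω.norm_sub_one_mul_nrT_sub_le ht hw hη
  rw [Complex.ofReal_mul, sub_self, sub_zero, ← Complex.ofReal_one, ← Complex.ofReal_sub, norm_mul,
    Complex.norm_real, Real.norm_of_nonneg (sub_pos.2 ht).le, nrT, norm_neg, norm_inv,
    ← div_eq_mul_inv, div_le_iff₀ hm] at hF
  simpa [abs_of_pos (mem_Ioi.1 hη), mul_assoc] using hF

theorem apply_mul_eq (hw : t - 1 ≤ t * μ.real {w}) (hμw : μ {w}ᶜ ≠ 0) : ω (t * w : ℝ) = w := by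
  have ht0 : 0 < t := by linarith
  have hw0 : μ {w} ≠ 0 := fun h => by simp [measureReal_def, h] at hw; linarith
  refine hω.apply_ofReal_of_tendsto_subordInv ht ?_ ?_
  · have hlim := (((tendsto_ofReal_add_mul_I w).mono_right nhdsWithin_le_nhds).const_mul
      (t : ℂ)).sub ((tendsto_nrT_zero_of_singleton_ne_zero hw0).const_mul ((t : ℂ) - 1))
    rw [mul_zero, sub_zero, ← Complex.ofReal_mul] at hlim
    refine hlim.congr' ?_
    filter_upwards [self_mem_nhdsWithin] with η hη
    rw [subordInv_of_im_pos μ t (im_ofReal_add_mul_I_pos w hη)]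
  · filter_upwards [self_mem_nhdsWithin] with η hη
    have him := im_ofReal_add_mul_I_pos w hη
    have hη_im : ((w : ℂ) + η * I).im = η := by simp
    rw [im_subordInv μ t him, hη_im, sub_pos]
    calc (t - 1) * (nrT μ (w + η * I)).im
        ≤ t * μ.real {w} * (nrT μ (w + η * I)).im :=
          mul_le_mul_of_nonneg_right hw (im_nrT_pos him).le
      _ = t * (μ.real {w} * (nrT μ (w + η * I)).im) := mul_assoc _ _ _
      _ < t * η := mul_lt_mul_of_pos_left (singleton_mul_im_nrT_lt hμw hη) ht0

theorem im_mul_apply_sub_pos {z : ℂ} (hz : 0 < z.im) : 0 < (t * ω z - z).im := by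
  rw [hω.eqn z hz, ← Complex.ofReal_one, ← Complex.ofReal_sub, Complex.im_ofReal_mul]
  exact mul_pos (sub_pos.2 ht) (im_nrT_pos (hω.maps z hz))

theorem im_stT_apply {z : ℂ} (hz : 0 < z.im) : (stT μ (ω z)).im =
    (t - 1) * ((t * ω z - z).im / Complex.normSq (t * ω z - z)) := by
  have hne : t * ω z - z ≠ 0 := fun h =>
    (hω.im_mul_apply_sub_pos ht hz).ne' (by rw [h, Complex.zero_im])
  rw [eq_div_of_mul_eq hne (hω.stT_mul hz), ← Complex.ofReal_one, ← Complex.ofReal_sub,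
    div_eq_mul_inv, Complex.im_ofReal_mul, Complex.inv_im]
  ring

/-- The atom at `w` alone bounds `Im m_μ(ω z)` from below, which confines `ω z` to a cone at `w`. -/
theorem abs_re_sub_le_im (hw : ω (t * w : ℝ) = w) (hη : 0 < η) :
    |(ω ((t * w : ℝ) + η * I) - w).re| ≤ (ω ((t * w : ℝ) + η * I) - w).im := by
  have hz := im_ofReal_add_mul_I_pos (t * w) hη
  set z : ℂ := (t * w : ℝ) + η * I with hzdef
  have hωz : 0 < (ω z).im := hω.maps z hz
  have hatom := singleton_mul_im_div_normSq_le_im_stT (μ := μ) hωz w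
  have hQ := hω.im_mul_apply_sub_pos ht hz
  have hQu : (t : ℂ) * ω z - z = t * (ω z - w) - η * I := by rw [hzdef]; push_cast; ring
  have hu : (ω z).im = (ω z - w).im := by simp
  rw [hω.im_stT_apply ht hz] at hatom
  rw [hQu] at hatom hQ
  rw [hu] at hatom hωz
  set u := ω z - w
  have hp := hω.sub_one_le_mul_singleton ht hw
  have ht1 : 0 < t - 1 := sub_pos.2 ht
  have hcone : (t - 1) * (u.im / Complex.normSq u) ≤
      (t - 1) * (t * ((t * u - η * I).im / Complex.normSq (t * u - η * I))) :=
    calc (t - 1) * (u.im / Complex.normSq u)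
        ≤ t * μ.real {w} * (u.im / Complex.normSq u) :=
          mul_le_mul_of_nonneg_right hp (div_nonneg hωz.le (Complex.normSq_nonneg u))
      _ = t * (μ.real {w} * (u.im / Complex.normSq u)) := mul_assoc _ _ _
      _ ≤ t * ((t - 1) * ((t * u - η * I).im / Complex.normSq (t * u - η * I))) :=
          mul_le_mul_of_nonneg_left hatom (by linarith)
      _ = _ := mul_left_comm _ _ _
  have hnormSq : ∀ {v : ℂ}, 0 < v.im → 0 < Complex.normSq v := fun hv =>
    Complex.normSq_pos.2 fun h => by simp [h] at hv
  rw [mul_le_mul_iff_right₀ ht1, ← mul_div_assoc, div_le_div_iff₀ (hnormSq hωz) (hnormSq hQ),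
    Complex.normSq_apply, Complex.normSq_apply] at hcone
  simp only [Complex.sub_re, Complex.sub_im, Complex.re_ofReal_mul, Complex.im_ofReal_mul,
    Complex.I_re, Complex.I_im, mul_zero, mul_one, sub_zero] at hcone
  refine abs_le_of_sq_le_sq (le_of_mul_le_mul_left ?_ (mul_pos (by linarith : 0 < t) hη)) hωz.le
  nlinarith [mul_pos hωz (mul_pos hη hη)]

end IsSubordT

namespace IsFreePow

variable [IsFiniteMeasure μ] [NeZero μ] (hμt : IsFreePow μ ω μt) (hω : IsSubordT μ t ω)
include hμt hω

theorem tendsto_stT (hne : t * ω e ≠ e) :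
    Tendsto (stT μt) (𝓝[UHP] e) (𝓝 ((1 - t) / (t * ω e - e))) := by
  have hQ := ((hω.tendsto (Complex.ofReal_im e).ge).const_mul (t : ℂ)).sub
    (tendsto_id.mono_left nhdsWithin_le_nhds)
  refine (tendsto_const_nhds.div hQ (sub_ne_zero.2 hne)).congr' ?_
  filter_upwards [hQ.eventually_ne (sub_ne_zero.2 hne), self_mem_nhdsWithin] with z hz hzU
  rw [hμt.2 z hzU]
  exact (div_eq_iff hz).2 (hω.stT_mul hzU).symm

theorem tendsto_im_stT (hne : t * ω e ≠ e) :
    Tendsto (fun η : ℝ => (stT μt (e + η * I)).im) (𝓝[>] 0)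
      (𝓝 ((t - 1) * t * (ω e).im / Complex.normSq (t * ω e - e))) := by
  have hlim := (Complex.continuous_im.tendsto _).comp
    ((hμt.tendsto_stT hω hne).comp (tendsto_ofReal_add_mul_I e))
  have him : ((1 - t : ℂ) / (t * ω e - e)).im =
      (t - 1) * t * (ω e).im / Complex.normSq (t * ω e - e) := by
    rw [← Complex.ofReal_one, ← Complex.ofReal_sub, div_eq_mul_inv, Complex.im_ofReal_mul,
      Complex.inv_im, Complex.sub_im, Complex.im_ofReal_mul, Complex.ofReal_im]
    ring
  rwa [him] at hlim

variable (ht : 1 < t)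
include ht

theorem densityDivergesAt_of_mul_apply_eq (he : t * ω e = e) : densityDivergesAt μt e := by
  obtain ⟨w, rfl⟩ : ∃ w, t * w = e := ⟨e / t, mul_div_cancel₀ e (by linarith)⟩
  have hw : ω (t * w : ℝ) = w := by
    rw [Complex.ofReal_mul] at he ⊢
    exact mul_left_cancel₀ (Complex.ofReal_ne_zero.2 (by linarith)) he
  have hp : 0 < μ.real {w} := by
    nlinarith [hω.sub_one_le_mul_singleton ht hw, measureReal_nonneg (μ := μ) (s := {w})]
  set u : ℝ → ℂ := fun η => ω ((t * w : ℝ) + η * I) - w with hu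
  have hu0 : Tendsto (fun η => (u η).im) (𝓝[>] 0) (𝓝[>] 0) :=
    tendsto_nhdsWithin_iff.2
      ⟨(Complex.continuous_im.tendsto 0).comp (hω.tendsto_apply_sub_of_apply_eq hw),
        eventually_nhdsWithin_of_forall fun η hη => hω.im_apply_sub_ofReal_pos (t * w) w hη⟩
  refine tendsto_atTop_mono' _ ?_
    ((tendsto_inv_nhdsGT_zero.comp hu0).const_mul_atTop (half_pos hp))
  filter_upwards [self_mem_nhdsWithin] with η hη
  have hηu : 0 < (u η).im := hω.im_apply_sub_ofReal_pos (t * w) w hη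
  have hz := im_ofReal_add_mul_I_pos (t * w) hη
  have hcone := sq_le_sq' (neg_le_of_abs_le (hω.abs_re_sub_le_im ht hw hη))
    (le_of_abs_le (hω.abs_re_sub_le_im ht hw hη))
  have hnormSq : Complex.normSq (u η) ≤ 2 * (u η).im ^ 2 := by
    rw [Complex.normSq_apply, ← sq, ← sq]
    linarith
  have hnormSq_pos : 0 < Complex.normSq (u η) :=
    Complex.normSq_pos.2 fun h => by simp [h] at hηu
  calc μ.real {w} / 2 * (u η).im⁻¹
      = μ.real {w} * ((u η).im / (2 * (u η).im ^ 2)) := by field_simp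
    _ ≤ μ.real {w} * ((u η).im / Complex.normSq (u η)) := by gcongr
    _ ≤ (stT μ (ω ((t * w : ℝ) + η * I))).im := by
        simpa [hu] using singleton_mul_im_div_normSq_le_im_stT (μ := μ) (hω.maps _ hz) w
    _ = (stT μt ((t * w : ℝ) + η * I)).im := by rw [hμt.2 _ hz]

theorem densityDivergesAt_iff : densityDivergesAt μt e ↔ t * ω e = e := by
  refine ⟨fun h => ?_, hμt.densityDivergesAt_of_mul_apply_eq hω ht⟩
  by_contra hne
  exact not_tendsto_nhds_of_tendsto_atTop h _ (hμt.tendsto_im_stT hω hne)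

theorem densityVanishesAt_iff : densityVanishesAt μt e ↔ (ω e).im = 0 ∧ t * ω e ≠ e := by
  by_cases he : t * ω e = e
  · have hdiv := hμt.densityDivergesAt_of_mul_apply_eq hω ht he
    exact iff_of_false (not_tendsto_nhds_of_tendsto_atTop hdiv _) fun h => h.2 he
  · have hlim := hμt.tendsto_im_stT hω he
    have hval : (t - 1) * t * (ω e).im / Complex.normSq (t * ω e - e) = 0 ↔ (ω e).im = 0 := by
      simp [sub_ne_zero.2 he, (sub_pos.2 ht).ne', (zero_lt_one.trans ht).ne']
    rw [and_iff_left he, ← hval]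
    refine ⟨tendsto_nhds_unique hlim, fun h => ?_⟩
    rwa [h] at hlim

theorem singleton_mul (hw : ω (t * w : ℝ) = w) :
    μt.real {t * w} = t * μ.real {w} - (t - 1) := by
  have := hμt.1
  have him : ∀ η : ℝ, 0 < η → 0 < (ω ((t * w : ℝ) + η * I) - w).im := fun η hη =>
    hω.im_apply_sub_ofReal_pos (t * w) w hη
  have hcone : ∀ η : ℝ, 0 < η →
      ‖ω ((t * w : ℝ) + η * I) - w‖ ≤ 2 * (ω ((t * w : ℝ) + η * I) - w).im := fun η hη => by
    have hnorm := Complex.norm_le_abs_re_add_abs_im (ω ((t * w : ℝ) + η * I) - w)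
    rw [abs_of_pos (him η hη)] at hnorm
    linarith [hω.abs_re_sub_le_im ht hw hη]
  have hmass := tendsto_mul_stT_of_nontangential (μ := μ) (hω.tendsto_apply_sub_of_apply_eq hw)
    (eventually_nhdsWithin_of_forall him) (eventually_nhdsWithin_of_forall hcone) w
  have hlim := (hmass.const_mul (t : ℂ)).sub (tendsto_mul_I_mul_stT (μ := μt) (t * w))
  have hconst : ∀ᶠ η : ℝ in 𝓝[>] 0, t * ((ω ((t * w : ℝ) + η * I) - w) *
      stT μ (w + (ω ((t * w : ℝ) + η * I) - w))) -
        (η * I) * stT μt ((t * w : ℝ) + η * I) = 1 - t := by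
    filter_upwards [self_mem_nhdsWithin] with η hη
    have hz := im_ofReal_add_mul_I_pos (t * w) hη
    rw [hμt.2 _ hz, add_sub_cancel, ← hω.stT_mul hz]
    push_cast
    ring
  have h := tendsto_nhds_unique (hlim.congr' hconst) tendsto_const_nhds
  have h' : t * -μ.real {w} - -μt.real {t * w} = 1 - t := by exact_mod_cast h
  linarith

end IsFreePow

end Atoms

section StieltjesInversion

open Complex (I)

variable {ν : Measure ℝ} {x η : ℝ} {s : Set ℝ}

theorem densityVanishesAt_of_notMem_msupp [IsFiniteMeasure ν] (hx : x ∉ msupp ν) :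
    densityVanishesAt ν x := by
  have hcont : ContinuousAt (stT ν) x :=
    (hasDerivAt_stT (mt ofReal_mem_image_msupp.1 hx)).continuousAt
  have hlim := (Complex.continuous_im.tendsto _).comp
    (hcont.tendsto.comp ((tendsto_ofReal_add_mul_I x).mono_right nhdsWithin_le_nhds))
  rwa [stT_ofReal, Complex.ofReal_im] at hlim

theorem real_closedBall_le_mul_im_stT [IsFiniteMeasure ν] (x : ℝ) (hη : 0 < η) :
    ν.real (Metric.closedBall x η) ≤ 2 * η * (stT ν (x + η * I)).im := by
  have hz := im_ofReal_add_mul_I_pos x hη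
  have hint := integrable_inv_normSq (notMem_image_msupp_of_im_pos (μ := ν) hz)
  have hle : ν.real (Metric.closedBall x η) * (2 * η ^ 2)⁻¹ ≤ Ifun ν (x + η * I) := calc
    ν.real (Metric.closedBall x η) * (2 * η ^ 2)⁻¹
        = ∫ y in Metric.closedBall x η, (2 * η ^ 2)⁻¹ ∂ν := by simp
    _ ≤ ∫ y in Metric.closedBall x η, (Complex.normSq (y - (x + η * I)))⁻¹ ∂ν := by
        refine setIntegral_mono_on (integrable_const _).integrableOn hint.integrableOn
          Metric.isClosed_closedBall.measurableSet fun y hy => ?_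
        have hnormSq : Complex.normSq (y - (x + η * I)) = |y - x| ^ 2 + η ^ 2 := by
          rw [Complex.normSq_apply, sq_abs]
          simp
          ring
        rw [hnormSq]
        refine inv_anti₀ (by positivity) ?_
        have hyx : |y - x| ≤ η := Metric.mem_closedBall.1 hy
        linarith [pow_le_pow_left₀ (abs_nonneg _) hyx 2]
    _ ≤ Ifun ν (x + η * I) := setIntegral_le_integral hint
        (.of_forall fun y => inv_nonneg.2 (Complex.normSq_nonneg _))
  have hη_im : ((x : ℂ) + η * I).im = η := by simp
  rw [← div_eq_mul_inv, div_le_iff₀ (by positivity)] at hle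
  rw [im_stT hz, hη_im]
  linarith

variable [IsFiniteMeasure ν]

theorem measure_le_mul_volume_of_eventually_im_stT_le {C : NNReal}
    (h : ∀ x ∈ s, ∀ᶠ η : ℝ in 𝓝[>] 0, (stT ν (x + η * I)).im ≤ C) : ν s ≤ C * volume s := by
  refine VitaliFamily.measure_le_of_frequently_le (Besicovitch.vitaliFamily ν)
    (C • (volume : Measure ℝ)) Measure.AbsolutelyContinuous.rfl s fun x hx => ?_
  refine (Besicovitch.tendsto_filterAt ν x).frequently (Eventually.frequently ?_)
  filter_upwards [h x hx, self_mem_nhdsWithin] with η hC hη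
  rw [mem_Ioi] at hη
  rw [Measure.smul_apply, Real.volume_closedBall, ENNReal.smul_def, smul_eq_mul,
    ← ofReal_measureReal, ← ENNReal.ofReal_coe_nnreal, ← ENNReal.ofReal_mul C.coe_nonneg]
  refine ENNReal.ofReal_le_ofReal ((real_closedBall_le_mul_im_stT x hη).trans ?_)
  rw [mul_comm]
  gcongr

theorem measure_eq_zero_of_acPart_eq_zero {C : NNReal}
    (h : ∀ x ∈ s, ∀ᶠ η : ℝ in 𝓝[>] 0, (stT ν (x + η * I)).im ≤ C) (hs : acPart ν s = 0) :
    ν s = 0 := by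
  obtain ⟨A, -, hsing, hvol⟩ := Measure.mutuallySingular_singularPart ν volume
  have hA : ν (s ∩ A) = 0 := measure_eq_zero_of_singularPart_of_acPart
    (measure_mono_null inter_subset_right hsing) (measure_mono_null inter_subset_left hs)
  have hAc : ν (s \ A) = 0 := by
    have hle := measure_le_mul_volume_of_eventually_im_stT_le (s := s \ A) fun x hx => h x hx.1
    rw [measure_mono_null (sdiff_subset_compl s A) hvol, mul_zero] at hle
    exact nonpos_iff_eq_zero.1 hle
  rw [← inter_union_sdiff s A]
  exact measure_union_null hA hAc

theorem measure_eq_zero_of_densityVanishesAt (h : ∀ x ∈ s, densityVanishesAt ν x) : ν s = 0 := by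
  refine measure_null_of_locally_null s fun x _ => ?_
  refine ⟨s ∩ Metric.ball x 1, inter_mem self_mem_nhdsWithin
    (mem_nhdsWithin_of_mem_nhds (Metric.ball_mem_nhds x one_pos)), ?_⟩
  have hfin : volume (s ∩ Metric.ball x 1) ≠ ⊤ :=
    measure_ne_top_of_subset inter_subset_right measure_ball_lt_top.ne
  have hle : ∀ ε : NNReal, ε ≠ 0 → ν (s ∩ Metric.ball x 1) ≤ ε * volume (s ∩ Metric.ball x 1) :=
    fun ε hε => measure_le_mul_volume_of_eventually_im_stT_le fun y hy =>
      (h y hy.1).eventually_le_const (NNReal.coe_pos.2 (pos_iff_ne_zero.2 hε))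
  have hlim : Tendsto (fun ε : NNReal => (ε : ENNReal) * volume (s ∩ Metric.ball x 1)) (𝓝[≠] 0)
      (𝓝 0) := by
    simpa using ENNReal.Tendsto.mul_const
      ((ENNReal.continuous_coe.tendsto (0 : NNReal)).mono_left nhdsWithin_le_nhds) (.inr hfin)
  exact nonpos_iff_eq_zero.1 (ge_of_tendsto hlim (eventually_nhdsWithin_of_forall hle))

end StieltjesInversion

section FreePowerSupport

variable {μ μt : Measure ℝ} {t : ℝ} {ω : ℂ → ℂ} {e : ℝ}

namespace IsSubordT

theorem continuous_ofReal (hω : IsSubordT μ t ω) : Continuous fun e : ℝ => ω e :=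
  hω.cont.comp_continuous Complex.continuous_ofReal fun e => (Complex.ofReal_im e).ge

theorem finite_setOf_mul_apply_eq [IsFiniteMeasure μ] [NeZero μ] (hω : IsSubordT μ t ω)
    (ht : 1 < t) : {e : ℝ | t * ω e = e}.Finite := by
  have ht0 : 0 < t := by linarith
  have hfin := Measure.finite_const_le_meas_of_disjoint_iUnion μ
    (ε := ENNReal.ofReal ((t - 1) / t)) (by simpa using div_pos (sub_pos.2 ht) ht0)
    (As := fun w : ℝ => {w}) measurableSet_singleton
    (fun _ _ h => disjoint_singleton.2 h) (measure_ne_top μ _)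
  refine (hfin.image (t * ·)).subset fun e he => ⟨e / t, ?_, mul_div_cancel₀ e ht0.ne'⟩
  have hw : ω (t * (e / t) : ℝ) = (e / t : ℝ) := by
    rw [mul_div_cancel₀ e ht0.ne', Complex.ofReal_div, eq_div_iff_mul_eq
      (Complex.ofReal_ne_zero.2 ht0.ne'), mul_comm]
    exact he
  rw [mem_ofPred_eq, ENNReal.ofReal_le_iff_le_toReal (measure_ne_top μ _), div_le_iff₀' ht0]
  exact hω.sub_one_le_mul_singleton ht hw

theorem eventually_mul_apply_ne [IsFiniteMeasure μ] [NeZero μ] (hω : IsSubordT μ t ω)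
    (ht : 1 < t) (e : ℝ) : ∀ᶠ x : ℝ in 𝓝 e, x ≠ e → t * ω x ≠ x := by
  have hfin := (hω.finite_setOf_mul_apply_eq ht).subset (sdiff_subset (t := {e}))
  filter_upwards [hfin.isClosed.isOpen_compl.mem_nhds fun h => h.2 rfl] with x hx hxe h
  exact hx ⟨h, hxe⟩

end IsSubordT

namespace IsFreePow

variable [IsFiniteMeasure μ] [NeZero μ] (hμt : IsFreePow μ ω μt) (hω : IsSubordT μ t ω)
  (ht : 1 < t)
include hμt hω ht

theorem acPart_setOf_im_eq_zero : acPart μt {e : ℝ | (ω e).im = 0} = 0 := by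
  have := hμt.1
  have hvanish : μt {e | densityVanishesAt μt e} = 0 :=
    measure_eq_zero_of_densityVanishesAt fun _ h => h
  refine measure_mono_null (fun e he => ?_)
    (measure_union_null (Measure.absolutelyContinuous_of_le (acPart_le μt) hvanish)
      (acPart_absolutelyContinuous μt ((hω.finite_setOf_mul_apply_eq ht).measure_zero volume)))
  by_cases h : t * ω e = e
  · exact .inr h
  · exact .inl ((hμt.densityVanishesAt_iff hω ht).2 ⟨he, h⟩)

/-- Off the support of the a.c. part, a non-real `ω e` would make `μt` locally null, and then the
density would vanish at `e`. -/
theorem im_eq_zero_of_notMem_msupp (he : e ∉ msupp (acPart μt)) : (ω e).im = 0 := by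
  by_contra him
  have := hμt.1
  obtain ⟨U, hU, hU0⟩ := notMem_msupp_iff.1 he
  have hQ : Continuous fun x : ℝ => t * ω x - x :=
    (hω.continuous_ofReal.const_mul _).sub Complex.continuous_ofReal
  have hQ0 : t * ω e - e ≠ 0 := fun h => him <| by
    simpa [(zero_lt_one.trans ht).ne'] using congrArg Complex.im h
  have hval : ContinuousAt (fun x : ℝ => (t - 1) * t * (ω x).im /
      Complex.normSq (t * ω x - x)) e :=
    ((Complex.continuous_im.comp hω.continuous_ofReal).const_mul _).continuousAt.div
      (Complex.continuous_normSq.comp hQ).continuousAt (Complex.normSq_pos.2 hQ0).ne'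
  obtain ⟨C, hC⟩ := exists_gt ((t - 1) * t * (ω e).im / Complex.normSq (t * ω e - e))
  have hbdd : ∀ᶠ x : ℝ in 𝓝 e, ∀ᶠ η : ℝ in 𝓝[>] 0,
      (stT μt (x + η * Complex.I)).im ≤ C.toNNReal := by
    filter_upwards [hval.eventually_lt_const hC, hQ.continuousAt.eventually_ne hQ0] with x hx hx0
    exact ((hμt.tendsto_im_stT hω (sub_ne_zero.1 hx0)).eventually_le_const hx).mono
      fun _ h => h.trans C.le_coe_toNNReal
  have hnull : μt (U ∩ {x | ∀ᶠ η : ℝ in 𝓝[>] 0,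
      (stT μt (x + η * Complex.I)).im ≤ C.toNNReal}) = 0 :=
    measure_eq_zero_of_acPart_eq_zero (fun x hx => hx.2) (measure_mono_null inter_subset_left hU0)
  have hsupp : e ∉ msupp μt := notMem_msupp_iff.2 ⟨_, inter_mem hU hbdd, hnull⟩
  exact him ((hμt.densityVanishesAt_iff hω ht).1 (densityVanishesAt_of_notMem_msupp hsupp)).1

theorem mem_msupp_of_mul_apply_eq (he : t * ω e = e) (h0 : μt {e} = 0) :
    e ∈ msupp (acPart μt) := by
  by_contra hcon
  have := hμt.1
  have hreal : ∀ᶠ x in 𝓝 e, x ∉ msupp (acPart μt) := isClosed_msupp.isOpen_compl.mem_nhds hcon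
  have hnull : μt ({x | x ∉ msupp (acPart μt) ∧ (x ≠ e → t * ω x ≠ x)} \ {e}) = 0 :=
    measure_eq_zero_of_densityVanishesAt fun x hx => (hμt.densityVanishesAt_iff hω ht).2
      ⟨hμt.im_eq_zero_of_notMem_msupp hω ht hx.1.1, hx.1.2 hx.2⟩
  rw [measure_sdiff_null h0] at hnull
  have hsupp : e ∉ msupp μt :=
    notMem_msupp_iff.2 ⟨_, hreal.and (hω.eventually_mul_apply_ne ht e), hnull⟩
  exact ((hμt.densityVanishesAt_iff hω ht).1 (densityVanishesAt_of_notMem_msupp hsupp)).2 he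

end IsFreePow

end FreePowerSupport

section RealValues

open Complex (I)

variable {μ μt : Measure ℝ} {t : ℝ} {ω : ℂ → ℂ} {e r : ℝ}

theorem tendsto_inv_normSq_ofReal_sub {x : ℝ} (hx : x ≠ r) :
    Tendsto (fun η : ℝ => (Complex.normSq (x - (r + η * I)))⁻¹) (𝓝[>] 0) (𝓝 ((x - r) ^ 2)⁻¹) := by
  have hlim := (Complex.continuous_normSq.tendsto _).comp
    (((tendsto_ofReal_add_mul_I r).mono_right nhdsWithin_le_nhds).const_sub (x : ℂ))
  rw [← Complex.ofReal_sub, Complex.normSq_ofReal, ← sq] at hlim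
  exact hlim.inv₀ (pow_ne_zero 2 (sub_ne_zero.2 hx))

theorem lintegral_inv_sq_le_of_eventually_Ifun_le [IsFiniteMeasure μ] {C : ℝ} (h0 : μ {r} = 0)
    (h : ∀ᶠ η : ℝ in 𝓝[>] 0, Ifun μ (r + η * I) ≤ C) :
    ∫⁻ x, ENNReal.ofReal (((x - r) ^ 2)⁻¹) ∂μ ≤ ENNReal.ofReal C := by
  obtain ⟨u, -, hu_pos, hu⟩ := exists_seq_strictAnti_tendsto (0 : ℝ)
  have hu' : Tendsto u atTop (𝓝[>] 0) := tendsto_nhdsWithin_iff.2 ⟨hu, .of_forall hu_pos⟩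
  have hae : ∀ᵐ x ∂μ, x ≠ r := measure_eq_zero_iff_ae_notMem.1 h0
  calc ∫⁻ x, ENNReal.ofReal (((x - r) ^ 2)⁻¹) ∂μ
      = ∫⁻ x, liminf (fun n =>
          ENNReal.ofReal (Complex.normSq (x - (r + u n * I)))⁻¹) atTop ∂μ := by
        refine lintegral_congr_ae (hae.mono fun x hx => Eq.symm (Tendsto.liminf_eq ?_))
        exact (ENNReal.continuous_ofReal.tendsto _).comp
          ((tendsto_inv_normSq_ofReal_sub hx).comp hu')
    _ ≤ liminf (fun n =>
          ∫⁻ x, ENNReal.ofReal (Complex.normSq (x - (r + u n * I)))⁻¹ ∂μ) atTop := by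
        have := Complex.continuous_normSq.measurable
        exact lintegral_liminf_le fun n => by fun_prop
    _ ≤ ENNReal.ofReal C := by
        refine liminf_le_of_frequently_le' (Eventually.frequently ?_)
        filter_upwards [hu'.eventually h] with n hn
        rw [← ofReal_integral_eq_lintegral_ofReal
          (integrable_inv_normSq (notMem_image_msupp_of_im_pos
            (im_ofReal_add_mul_I_pos r (hu_pos n))))
          (.of_forall fun y => inv_nonneg.2 (Complex.normSq_nonneg _))]
        exact ENNReal.ofReal_le_ofReal hn

namespace IsSubordT

variable (hω : IsSubordT μ t ω)
include hω

theorem re_lt_re [IsFiniteMeasure μ] [NeZero μ] (ht : 1 < t) {e' : ℝ} (he : (ω e).im = 0)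
    (he' : (ω e').im = 0) (hlt : e < e') : (ω e).re < (ω e').re :=
  hω.lt_of_apply_eq ht (Complex.ext rfl he) (Complex.ext rfl he') hlt

variable [IsFiniteMeasure μ] [NeZero μ] (ht : 1 < t)
include ht

theorem stTR_ne_zero_of_apply_eq (hr : ω e = r) (hsupp : r ∉ msupp μ) : stTR μ r ≠ 0 := by
  intro h0
  have hm : Tendsto (fun η : ℝ => stT μ (r + η * I)) (𝓝[>] 0) (𝓝 0) := by
    have hcont := (hasDerivAt_stT (mt ofReal_mem_image_msupp.1 hsupp)).continuousAt.tendsto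
    rw [stT_ofReal, h0, Complex.ofReal_zero] at hcont
    exact hcont.comp ((tendsto_ofReal_add_mul_I r).mono_right nhdsWithin_le_nhds)
  have hprod := (hω.tendsto_sub_one_mul_nrT ht hr).mul hm
  rw [mul_zero] at hprod
  have hconst : ∀ᶠ η : ℝ in 𝓝[>] 0,
      ((t : ℂ) - 1) * nrT μ (r + η * I) * stT μ (r + η * I) = 1 - t := by
    filter_upwards [self_mem_nhdsWithin] with η hη
    rw [nrT, mul_assoc, neg_mul, inv_mul_cancel₀ (stT_ne_zero (im_ofReal_add_mul_I_pos r hη))]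
    ring
  have h := tendsto_nhds_unique (hprod.congr' hconst) tendsto_const_nhds
  have h' : 0 = 1 - t := by exact_mod_cast h
  linarith

/-- `F_μ(r + iη)` has a non-zero limit with imaginary part `O(η)`, so `I_μ(r + iη)` is bounded. -/
theorem lintegral_inv_sq_lt_top (hr : ω e = r) (h0 : μ {r} = 0) :
    ∫⁻ x, ENNReal.ofReal (((x - r) ^ 2)⁻¹) ∂μ < ⊤ := by
  have hne : (t * r - e : ℂ) ≠ 0 := fun h => by
    have he : e = t * r := by exact_mod_cast (sub_eq_zero.1 h).symm
    have hle := hω.sub_one_le_mul_singleton ht (he ▸ hr)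
    rw [measureReal_def, h0, ENNReal.toReal_zero, mul_zero] at hle
    linarith
  have ht1 : 0 < t - 1 := sub_pos.2 ht
  obtain ⟨C, hC⟩ := exists_gt (‖((t : ℂ) * r - e)⁻¹‖ ^ 2)
  have hbdd := (((hω.tendsto_sub_one_mul_nrT ht hr).inv₀ hne).norm.pow 2).eventually_le_const hC
  refine (lintegral_inv_sq_le_of_eventually_Ifun_le (C := t * (t - 1) * C) h0 ?_).trans_lt
    ENNReal.ofReal_lt_top
  filter_upwards [hbdd, self_mem_nhdsWithin] with η hηC hη
  have hz := im_ofReal_add_mul_I_pos r hη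
  have hm : 0 < ‖stT μ (r + η * I)‖ := norm_pos_iff.2 (stT_ne_zero hz)
  have him : (t - 1) * (nrT μ (r + η * I)).im ≤ t * η := by
    simpa using ((le_abs_self _).trans (Complex.abs_im_le_norm _)).trans
      (hω.norm_sub_one_mul_nrT_sub_le ht hr hη)
  have hη_im : ((r : ℂ) + η * I).im = η := by simp
  rw [im_nrT, im_stT hz, hη_im, ← mul_div_assoc, div_le_iff₀ (by positivity)] at him
  rw [nrT, ← Complex.ofReal_one, ← Complex.ofReal_sub, norm_inv, norm_mul, norm_neg, norm_inv,
    Complex.norm_real, Real.norm_of_nonneg ht1.le, mul_inv, inv_inv, mul_pow, inv_pow,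
    inv_mul_le_iff₀ (by positivity)] at hηC
  refine le_of_mul_le_mul_left ?_ (mul_pos ht1 (mem_Ioi.1 hη))
  calc (t - 1) * η * Ifun μ (r + η * I)
      ≤ t * η * ‖stT μ (r + η * I)‖ ^ 2 := by linarith
    _ ≤ t * η * ((t - 1) ^ 2 * C) :=
        mul_le_mul_of_nonneg_left hηC (mul_pos (by linarith) hη).le
    _ = (t - 1) * η * (t * (t - 1) * C) := by ring

theorem singleton_ne_zero_of_apply_eq (hr : ω e = r)
    (hdiv : ∫⁻ x, ENNReal.ofReal (((x - r) ^ 2)⁻¹) ∂μ = ⊤) : μ {r} ≠ 0 := fun h0 =>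
  (hω.lintegral_inv_sq_lt_top ht hr h0).ne hdiv

end IsSubordT

theorem not_eventually_notMem_msupp_acPart [SigmaFinite μ] (hr : r ∈ msupp (acPart μ)) :
    ¬∀ᶠ x in 𝓝[≠] r, x ∉ msupp (acPart μ) := by
  intro h
  have hnull : acPart μ {x | x ∈ msupp (acPart μ) → x = r} = 0 := by
    refine measure_mono_null (t := (msupp (acPart μ))ᶜ ∪ {r}) (fun x hx => ?_)
      (measure_union_null ae_mem_msupp
        (acPart_absolutelyContinuous μ (measure_singleton r)))
    by_cases hxs : x ∈ msupp (acPart μ)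
    · exact .inr (hx hxs)
    · exact .inl hxs
  refine notMem_msupp_iff.2 ⟨_, ?_, hnull⟩ hr
  filter_upwards [eventually_nhdsWithin_iff.1 h] with x hx hxs
  by_contra hne
  exact hx hne hxs

/-- Off `msupp (acPart μt)` the values of `ω` are real and increase continuously through `r`,
whereas those in `msupp (acPart μ)` are atoms, taken only at the finitely many `e` with
`t * ω e = e`. -/
theorem IsFreePow.mem_msupp_acPart_of_apply_eq [IsFiniteMeasure μ] [NeZero μ]
    (hμt : IsFreePow μ ω μt) (hω : IsSubordT μ t ω) (ht : 1 < t)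
    (hdiv : ∀ r ∈ msupp (acPart μ), ∫⁻ x, ENNReal.ofReal (((x - r) ^ 2)⁻¹) ∂μ = ⊤)
    (hr : ω e = r) (hsupp : r ∈ msupp (acPart μ)) : e ∈ msupp (acPart μt) := by
  by_contra hcon
  have hreal : ∀ᶠ x in 𝓝 e, x ∉ msupp (acPart μt) := isClosed_msupp.isOpen_compl.mem_nhds hcon
  obtain ⟨δ, hδ, hball⟩ := Metric.nhds_basis_closedBall.eventually_iff.1
    (hreal.and (hω.eventually_mul_apply_ne ht e))
  rw [Real.closedBall_eq_Icc] at hball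
  have him : ∀ x ∈ Icc (e - δ) (e + δ), (ω x).im = 0 := fun x hx =>
    hμt.im_eq_zero_of_notMem_msupp hω ht (hball hx).1
  have hmono : StrictMonoOn (fun x : ℝ => (ω x).re) (Icc (e - δ) (e + δ)) :=
    fun x hx y hy hxy => hω.re_lt_re ht (him x hx) (him y hy) hxy
  have hre : (ω e).re = r := by rw [hr, Complex.ofReal_re]
  have he : e ∈ Icc (e - δ) (e + δ) := ⟨by linarith, by linarith⟩
  have hle : e - δ ≤ e + δ := by linarith
  have himage : Ioo (ω (e - δ : ℝ)).re (ω (e + δ : ℝ)).re ⊆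
      (fun x : ℝ => (ω x).re) '' Ioo (e - δ) (e + δ) := intermediate_value_Ioo hle
    (Complex.continuous_re.comp hω.continuous_ofReal).continuousOn
  have hnhds : Ioo (ω (e - δ : ℝ)).re (ω (e + δ : ℝ)).re ∈ 𝓝 r := hre ▸ Ioo_mem_nhds
    (hmono (left_mem_Icc.2 hle) he (by linarith)) (hmono he (right_mem_Icc.2 hle) (by linarith))
  refine not_eventually_notMem_msupp_acPart hsupp (eventually_nhdsWithin_iff.2 ?_)
  filter_upwards [hnhds] with y hy hyr hysupp
  obtain ⟨x, hx, rfl⟩ := himage hy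
  have hx' := Ioo_subset_Icc_self hx
  have hωx : ω x = (ω x).re := Complex.ext rfl (him x hx')
  have hatom := hω.singleton_ne_zero_of_apply_eq ht hωx (hdiv _ hysupp)
  refine (hball hx').2 (fun hxe => hyr (hxe ▸ hre)) ?_
  rw [hωx]
  exact_mod_cast (hω.eq_mul_of_apply_eq_of_singleton_ne_zero ht hωx hatom).symm

end RealValues

section RealContinuation

open Complex (ofReal I)

variable {μ : Measure ℝ} {t : ℝ} {ω : ℂ → ℂ} {e r : ℝ}

theorem exists_hasDerivAt_pos_mem_Ioo {f f' : ℝ → ℝ} {a b c d : ℝ} (hab : a ≤ b)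
    (hf : ∀ x ∈ Icc a b, HasDerivAt f (f' x) x) (hc : f a ≤ c) (hcd : c < d) (hd : d ≤ f b) :
    ∃ x ∈ Icc a b, f x ∈ Ioo c d ∧ 0 < f' x := by
  have hcont : ContinuousOn f (Icc a b) := fun x hx => (hf x hx).continuousAt.continuousWithinAt
  obtain ⟨p, ⟨hp, hpc⟩, hp_max⟩ := (isCompact_Icc.of_isClosed_subset
    (hcont.preimage_isClosed_of_isClosed isClosed_Icc isClosed_Iic)
    inter_subset_left).exists_isGreatest ⟨a, left_mem_Icc.2 hab, hc⟩
  have hpb : Icc p b ⊆ Icc a b := Icc_subset_Icc_left hp.1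
  obtain ⟨q, ⟨hq, hqd⟩, hq_min⟩ := (isCompact_Icc.of_isClosed_subset
    ((hcont.mono hpb).preimage_isClosed_of_isClosed isClosed_Icc isClosed_Ici)
    inter_subset_left).exists_isLeast ⟨b, right_mem_Icc.2 hp.2, hd⟩
  have hfpq : f p < f q := (mem_Iic.1 hpc).trans_lt (hcd.trans_le hqd)
  have hpq : p < q := hq.1.lt_of_ne fun h => hfpq.ne (congrArg f h)
  have hsub : Icc p q ⊆ Icc a b := (Icc_subset_Icc_right hq.2).trans hpb
  obtain ⟨x, hx, hfx⟩ := exists_hasDerivAt_eq_slope f f' hpq (hcont.mono hsub)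
    fun x hx => hf x (hsub (Ioo_subset_Icc_self hx))
  have hxab := hsub (Ioo_subset_Icc_self hx)
  refine ⟨x, hxab, ⟨?_, ?_⟩, hfx ▸ div_pos (sub_pos.2 hfpq) (sub_pos.2 hpq)⟩
  · by_contra! h
    exact hx.1.not_ge (hp_max ⟨hxab, h⟩)
  · by_contra! h
    exact hx.2.not_ge (hq_min ⟨⟨hx.1.le, hxab.2⟩, h⟩)

theorem notMem_msupp_of_ne {x : ℝ} (hne : x ≠ r) (hx : x ∉ msupp (μ.restrict {r}ᶜ)) :
    x ∉ msupp μ := by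
  obtain ⟨U, hU, hμU⟩ := notMem_msupp_iff.1 hx
  rw [Measure.restrict_apply' (measurableSet_singleton r).compl] at hμU
  exact notMem_msupp_iff.2 ⟨_, inter_mem hU (isOpen_compl_singleton.mem_nhds hne), hμU⟩

theorem nrT_eq_div_of_notMem_msupp [IsFiniteMeasure μ] {z : ℂ} (hz : z ∉ ofReal '' msupp μ)
    (hzr : z ≠ r) :
    nrT μ z = (z - r) / (μ.real {r} - (z - r) * stT (μ.restrict {r}ᶜ) z) := by
  have hne : z - r ≠ 0 := sub_ne_zero.2 hzr
  have hstT : stT μ z = -((μ.real {r} - (z - r) * stT (μ.restrict {r}ᶜ) z) / (z - r)) := by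
    rw [stT_eq_add_restrict_compl_singleton hz r, ← neg_sub z (r : ℂ)]
    field_simp
    ring
  rw [nrT, hstT, inv_neg, neg_neg, inv_div]

theorem eventually_re_notMem_msupp (hr : r ∉ msupp μ) :
    ∀ᶠ z : ℂ in 𝓝 (r : ℂ), z.re ∉ msupp μ :=
  (Complex.continuous_re.tendsto' (r : ℂ) r (Complex.ofReal_re r)).eventually_mem
    (isClosed_msupp.isOpen_compl.mem_nhds hr)

theorem im_subordInv_ofReal (μ : Measure ℝ) (t r : ℝ) : (subordInv μ t r).im = 0 := by
  have him : (nrTExt μ r).im = 0 := by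
    by_cases hr : μ {r} = 0
    · rw [nrTExt_of_singleton_eq_zero hr, nrT, stT_ofReal, ← Complex.ofReal_inv,
        ← Complex.ofReal_neg, Complex.ofReal_im]
    · rw [nrTExt_of_singleton_ne_zero hr, Complex.zero_im]
  rw [subordInv, ← Complex.ofReal_one, ← Complex.ofReal_sub, Complex.sub_im,
    Complex.im_ofReal_mul, Complex.im_ofReal_mul, him, Complex.ofReal_im]
  ring

theorem ofReal_re_subordInv (μ : Measure ℝ) (t r : ℝ) :
    ((subordInv μ t r).re : ℂ) = subordInv μ t r :=
  Complex.ext rfl (im_subordInv_ofReal μ t r).symm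

theorem analyticAt_subordInv (h : AnalyticAt ℂ (nrTExt μ) r) (t : ℝ) :
    AnalyticAt ℂ (subordInv μ t) r :=
  (analyticAt_const.mul analyticAt_id).sub (analyticAt_const.mul h)

variable [IsFiniteMeasure μ]

theorem analyticAt_nrTExt_of_notMem_msupp (hr : r ∉ msupp μ) (h0 : stTR μ r ≠ 0) :
    AnalyticAt ℂ (nrTExt μ) r := by
  have hstT : stT μ r ≠ 0 := by rwa [stT_ofReal, Complex.ofReal_ne_zero]
  refine ((analyticAt_stT (mt ofReal_mem_image_msupp.1 hr)).inv hstT).neg.congr ?_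
  filter_upwards [eventually_re_notMem_msupp hr] with z hz
  exact (if_neg fun h => hz (mem_msupp_of_singleton_ne_zero h.2)).symm

theorem analyticAt_nrTExt_of_singleton_ne_zero (hr : r ∉ msupp (μ.restrict {r}ᶜ))
    (hatom : μ {r} ≠ 0) : AnalyticAt ℂ (nrTExt μ) r := by
  have hp : (μ.real {r} : ℂ) ≠ 0 :=
    Complex.ofReal_ne_zero.2 ((measureReal_ne_zero_iff).2 hatom)
  have hsub : AnalyticAt ℂ (fun z : ℂ => z - r) r := analyticAt_id.sub analyticAt_const
  have hden : AnalyticAt ℂ (fun z => μ.real {r} - (z - r) * stT (μ.restrict {r}ᶜ) z) (r : ℂ) :=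
    analyticAt_const.sub (hsub.mul (analyticAt_stT (mt ofReal_mem_image_msupp.1 hr)))
  refine (hsub.div hden (by simpa only [sub_self, zero_mul, sub_zero] using hp)).congr ?_
  filter_upwards [eventually_re_notMem_msupp hr] with z hz
  obtain rfl | hzr := eq_or_ne z r
  · rw [nrTExt_of_singleton_ne_zero hatom]
    simp
  · have hre : z.im = 0 → z.re ∉ msupp μ := fun him =>
      notMem_msupp_of_ne (fun h => hzr (Complex.ext h him)) hz
    have hz' : z ∉ ofReal '' msupp μ := by
      rintro ⟨x, hx, rfl⟩
      exact hre rfl hx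
    rw [nrTExt, if_neg fun h => hre h.1 (mem_msupp_of_singleton_ne_zero h.2),
      nrT_eq_div_of_notMem_msupp hz' hzr]
    rfl

theorem analyticAt_nrTExt (hr : r ∉ msupp (μ.restrict {r}ᶜ)) (h0 : r ∉ msupp μ → stTR μ r ≠ 0) :
    AnalyticAt ℂ (nrTExt μ) r := by
  by_cases hatom : μ {r} = 0
  · have hae : ∀ᵐ x ∂μ, x ∈ ({r} : Set ℝ)ᶜ := measure_eq_zero_iff_ae_notMem.1 hatom
    rw [Measure.restrict_eq_self_of_ae_mem hae] at hr
    exact analyticAt_nrTExt_of_notMem_msupp hr (h0 hr)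
  · exact analyticAt_nrTExt_of_singleton_ne_zero hr hatom

namespace IsSubordT

variable [NeZero μ] (hω : IsSubordT μ t ω) (ht : 1 < t)
include hω ht

theorem subordInv_ofReal_of_apply_eq (hr : ω e = r) (hcont : ContinuousAt (subordInv μ t) r) :
    subordInv μ t r = e :=
  tendsto_nhds_unique
    (hcont.tendsto.comp ((tendsto_ofReal_add_mul_I r).mono_right nhdsWithin_le_nhds))
    (hω.tendsto_subordInv ht hr)

/-- Where `Φ' > 0`, the map `Φ` sends points just above `r` into the upper half-plane. -/
theorem apply_re_subordInv {d : ℂ} (hd : HasDerivAt (subordInv μ t) d r) (hpos : 0 < d.re) :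
    ω (subordInv μ t r).re = r := by
  have hlim := hd.continuousAt.tendsto.comp
    ((tendsto_ofReal_add_mul_I r).mono_right nhdsWithin_le_nhds)
  rw [← ofReal_re_subordInv] at hlim
  refine hω.apply_ofReal_of_tendsto_subordInv ht hlim ?_
  have hpath : HasDerivAt (fun η : ℝ => (r : ℂ) + η * I) I 0 := by
    simpa using ((hasDerivAt_id (0 : ℝ)).ofReal_comp.mul_const I).const_add (r : ℂ)
  have hcomp : HasDerivAt (fun η : ℝ => (subordInv μ t (r + η * I)).im) (d * I).im 0 :=
    (Complex.imCLM.hasFDerivAt.comp_hasDerivAt (0 : ℝ)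
      (HasDerivAt.comp (0 : ℝ) (h₂ := subordInv μ t) (by simpa using hd) hpath))
  rw [Complex.mul_I_im] at hcomp
  filter_upwards [hcomp.tendsto_slope_zero_right.eventually_const_lt hpos, self_mem_nhdsWithin]
    with η hslope hη
  simpa [im_subordInv_ofReal, mem_Ioi.1 hη] using hslope

/-- If `ω` were non-real on an interval `(c, d)` of `[s, s']`, then `subordInv μ t`, which maps
`[r, r']` onto at least `[s, s']`, would be increasing at some real point with value in `(c, d)`. -/
theorem im_eq_zero_of_analyticAt {s s' r' : ℝ} (hs : ω s = r) (hs' : ω s' = r')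
    (han : ∀ x ∈ Icc r r', AnalyticAt ℂ (nrTExt μ) x) (he : e ∈ Icc s s') : (ω e).im = 0 := by
  by_contra hne
  have him : ∀ {x y : ℝ}, ω x = y → (ω x).im = 0 := fun h => h ▸ Complex.ofReal_im _
  have hes : s < e := he.1.lt_of_ne fun h => hne (h ▸ him hs)
  have hes' : e < s' := he.2.lt_of_ne fun h => hne (h.symm ▸ him hs')
  have hr_le : r ≤ r' := (hω.lt_of_apply_eq ht hs hs' (hes.trans hes')).le
  have hopen : IsOpen {x : ℝ | (ω x).im ≠ 0} :=
    isOpen_ne_fun (Complex.continuous_im.comp hω.continuous_ofReal) continuous_const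
  obtain ⟨c, d, hecd, hcd⟩ := mem_nhds_iff_exists_Ioo_subset.1
    (inter_mem (Ioo_mem_nhds hes hes') (hopen.mem_nhds hne))
  have hcd_lt := hecd.1.trans hecd.2
  obtain ⟨hc, hd⟩ := (Ioo_subset_Ioo_iff hcd_lt).1 (hcd.trans inter_subset_left)
  have hder : ∀ x ∈ Icc r r', HasDerivAt (subordInv μ t) (deriv (subordInv μ t) x) x :=
    fun x hx => (analyticAt_subordInv (han x hx) t).differentiableAt.hasDerivAt
  have hre : ∀ {x y : ℝ}, y ∈ Icc r r' → ω x = y → (subordInv μ t y).re = x := fun hy h => by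
    rw [hω.subordInv_ofReal_of_apply_eq ht h (hder _ hy).continuousAt, Complex.ofReal_re]
  obtain ⟨x, hx, hxcd, hpos⟩ := exists_hasDerivAt_pos_mem_Ioo hr_le
    (fun x hx => (hder x hx).real_of_complex) ((hre (left_mem_Icc.2 hr_le) hs).trans_le hc) hcd_lt
    (hd.trans_eq (hre (right_mem_Icc.2 hr_le) hs').symm)
  exact (hcd hxcd).2 (him (hω.apply_re_subordInv ht (hder x hx) hpos))

end IsSubordT

end RealContinuation

section Infinity

open Bornology (cobounded IsBounded)

variable {μ : Measure ℝ} {t : ℝ} {ω : ℂ → ℂ}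

theorem tendsto_div_sub_cobounded (w : ℂ) :
    Tendsto (fun z => z / (w - z)) (cobounded ℂ) (𝓝 (-1)) := by
  have hinv : Tendsto (fun z => (w - z)⁻¹) (cobounded ℂ) (𝓝 0) :=
    tendsto_inv₀_cobounded.comp (tendsto_const_sub_cobounded w)
  have hlim := (hinv.const_mul w).sub_const 1
  rw [mul_zero, zero_sub] at hlim
  refine hlim.congr' ?_
  filter_upwards [(tendsto_const_sub_cobounded w).eventually (Bornology.eventually_ne_cobounded 0)]
    with z hz
  have hz' : w - z ≠ 0 := hz
  field_simp
  ring

variable [IsProbabilityMeasure μ]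

theorem tendsto_integral_div_sub_pow (hμ : IsBounded (msupp μ)) (k : ℕ) :
    Tendsto (fun z : ℂ => ∫ x, (z / ((x : ℂ) - z)) ^ k ∂μ) (cobounded ℂ) (𝓝 ((-1) ^ k)) := by
  obtain ⟨R, hR⟩ := hμ.exists_norm_le
  have hlim : ((-1) ^ k : ℂ) = ∫ _, (-1) ^ k ∂μ := by simp
  rw [hlim]
  have : (cobounded ℂ).IsCountablyGenerated := comap_norm_atTop (E := ℂ) ▸ inferInstance
  refine tendsto_integral_filter_of_dominated_convergence (fun _ => 2 ^ k)
    (.of_forall fun z => (by fun_prop : Measurable _).aestronglyMeasurable) ?_ (integrable_const _)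
    (.of_forall fun x => (tendsto_div_sub_cobounded x).pow k)
  filter_upwards [eventually_cobounded_le_norm (2 * R), Bornology.eventually_ne_cobounded 0]
    with z hz hz0
  filter_upwards [ae_mem_msupp] with x hx
  have hxR : ‖(x : ℂ)‖ ≤ R := by simpa using hR x hx
  have hsub : ‖z‖ - ‖(x : ℂ)‖ ≤ ‖(x : ℂ) - z‖ :=
    (norm_sub_norm_le z (x : ℂ)).trans_eq (norm_sub_rev _ _)
  have hz_pos := norm_pos_iff.2 hz0
  rw [norm_pow, norm_div]
  gcongr
  rw [div_le_iff₀ (by linarith)]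
  linarith

theorem tendsto_mul_stT_cobounded (hμ : IsBounded (msupp μ)) :
    Tendsto (fun z => z * stT μ z) (cobounded ℂ) (𝓝 (-1)) := by
  simpa only [pow_one, stT, div_eq_mul_inv, integral_const_mul]
    using tendsto_integral_div_sub_pow hμ 1

theorem tendsto_sq_mul_integral_inv_sq_cobounded (hμ : IsBounded (msupp μ)) :
    Tendsto (fun z : ℂ => z ^ 2 * ∫ x, (((x : ℂ) - z) ^ 2)⁻¹ ∂μ) (cobounded ℂ) (𝓝 1) := by
  simpa only [even_two.neg_one_pow, div_eq_mul_inv, mul_pow, inv_pow, integral_const_mul]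
    using tendsto_integral_div_sub_pow hμ 2

theorem eventually_stT_ne_zero (hμ : IsBounded (msupp μ)) : ∀ᶠ z in cobounded ℂ, stT μ z ≠ 0 :=
  ((tendsto_mul_stT_cobounded hμ).eventually_ne (by norm_num)).mono fun _ => right_ne_zero_of_mul

theorem tendsto_re_subordInv_div (hμ : IsBounded (msupp μ)) (t : ℝ) :
    Tendsto (fun x : ℝ => (subordInv μ t x).re / x) (cobounded ℝ) (𝓝 1) := by
  have hF := (((tendsto_mul_stT_cobounded hμ).inv₀ (by norm_num)).const_mul ((t : ℂ) - 1)).const_add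
    (t : ℂ)
  have hlim := (Complex.continuous_re.tendsto _).comp
    (hF.comp (RCLike.tendsto_ofReal_cobounded_cobounded ℂ))
  rw [show ((t : ℂ) + (t - 1) * (-1)⁻¹).re = 1 by norm_num] at hlim
  refine hlim.congr' ?_
  filter_upwards [Bornology.isBounded_def.1 hμ, Bornology.eventually_ne_cobounded 0] with x hx hx0
  have hx0' : (x : ℂ) ≠ 0 := Complex.ofReal_ne_zero.2 hx0
  rw [subordInv, nrTExt_of_singleton_eq_zero (not_not.1 (mt mem_msupp_of_singleton_ne_zero hx)),
    nrT, ← Complex.div_ofReal_re]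
  simp only [Function.comp_apply, RCLike.ofReal_eq_complex_ofReal]
  congr 1
  field_simp
  ring

theorem tendsto_re_subordInv_atTop (hμ : IsBounded (msupp μ)) (t : ℝ) :
    Tendsto (fun x : ℝ => (subordInv μ t x).re) atTop atTop := by
  refine (((tendsto_re_subordInv_div hμ t).mono_left
    IsOrderBornology.atTop_le_cobounded).pos_mul_atTop one_pos tendsto_id).congr' ?_
  filter_upwards [eventually_ne_atTop 0] with x hx
  exact div_mul_cancel₀ _ hx

theorem tendsto_re_subordInv_atBot (hμ : IsBounded (msupp μ)) (t : ℝ) :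
    Tendsto (fun x : ℝ => (subordInv μ t x).re) atBot atBot := by
  refine (((tendsto_re_subordInv_div hμ t).mono_left
    IsOrderBornology.atBot_le_cobounded).pos_mul_atBot one_pos tendsto_id).congr' ?_
  filter_upwards [eventually_ne_atBot 0] with x hx
  exact div_mul_cancel₀ _ hx

theorem hasDerivAt_nrT {z : ℂ} (hz : z ∉ Complex.ofReal '' msupp μ) (h0 : stT μ z ≠ 0) :
    HasDerivAt (nrT μ) ((∫ x, (((x : ℂ) - z) ^ 2)⁻¹ ∂μ) / stT μ z ^ 2) z := by
  have h := ((hasDerivAt_stT hz).fun_inv h0).fun_neg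
  rwa [neg_div, neg_neg] at h

theorem hasDerivAt_subordInv {r : ℝ} (hr : r ∉ msupp μ) (h0 : stT μ r ≠ 0) (t : ℝ) :
    HasDerivAt (subordInv μ t)
      (t - (t - 1) * ((∫ x, (((x : ℂ) - r) ^ 2)⁻¹ ∂μ) / stT μ r ^ 2)) r := by
  have hF : HasDerivAt (nrTExt μ) ((∫ x, (((x : ℂ) - r) ^ 2)⁻¹ ∂μ) / stT μ r ^ 2) r := by
    refine (hasDerivAt_nrT (mt ofReal_mem_image_msupp.1 hr) h0).congr_of_eventuallyEq ?_
    filter_upwards [eventually_re_notMem_msupp hr] with z hz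
    exact if_neg fun h => hz (mem_msupp_of_singleton_ne_zero h.2)
  have h := ((hasDerivAt_id' (r : ℂ)).const_mul (t : ℂ)).sub (hF.const_mul ((t : ℂ) - 1))
  rwa [mul_one] at h

theorem IsSubordT.eventually_apply_re_subordInv (hω : IsSubordT μ t ω) (ht : 1 < t)
    (hμ : IsBounded (msupp μ)) : ∀ᶠ x : ℝ in cobounded ℝ, ω (subordInv μ t x).re = x := by
  have hderiv : Tendsto
      (fun z => (t : ℂ) - (t - 1) * ((∫ x, (((x : ℂ) - z) ^ 2)⁻¹ ∂μ) / stT μ z ^ 2))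
      (cobounded ℂ) (𝓝 1) := by
    have hquot := (tendsto_sq_mul_integral_inv_sq_cobounded hμ).div
      ((tendsto_mul_stT_cobounded hμ).pow 2) (by norm_num)
    have hlim := (hquot.const_mul ((t : ℂ) - 1)).const_sub (t : ℂ)
    rw [show (t : ℂ) - (t - 1) * (1 / (-1) ^ 2) = 1 by ring] at hlim
    refine hlim.congr' ?_
    filter_upwards [Bornology.eventually_ne_cobounded 0] with z hz
    rw [Pi.div_apply, mul_pow, mul_div_mul_left _ _ (pow_ne_zero 2 hz)]
  have hpos := ((Complex.continuous_re.tendsto _).comp hderiv).eventually_const_lt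
    (show 0 < (1 : ℂ).re by norm_num)
  have hreal := RCLike.tendsto_ofReal_cobounded_cobounded ℂ
  filter_upwards [Bornology.isBounded_def.1 hμ, hreal.eventually (eventually_stT_ne_zero hμ),
    hreal.eventually hpos] with x hx hx0 hxpos
  exact hω.apply_re_subordInv ht (hasDerivAt_subordInv hx hx0 t) hxpos

end Infinity

section Counting

lemma encard_le_encard_of_interlacing {S R : Set ℝ} (hR : R.Finite) {g : ℝ → ℝ}
    (hlast : ∀ s ∈ S, ∃ x ∈ R, g s < x)
    (hstep : ∀ s ∈ S, ∀ s' ∈ S, s < s' → ∃ x ∈ R, g s < x ∧ x ≤ g s') :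
    S.encard ≤ R.encard := by
  let next (s : ℝ) : ℝ := sInf {x ∈ R | g s < x}
  have next_mem (s : ℝ) (hs : s ∈ S) : next s ∈ R ∧ g s < next s :=
    Set.Nonempty.csInf_mem (hlast s hs) (hR.subset (sep_subset R _))
  have next_le (s x : ℝ) (hx : x ∈ R) (hsx : g s < x) : next s ≤ x :=
    csInf_le (hR.subset (sep_subset R _)).bddBelow ⟨hx, hsx⟩
  have hmono : StrictMonoOn next S := fun s hs s' hs' hss' => by
    obtain ⟨x, hxR, hsx, hxs'⟩ := hstep s hs s' hs' hss'
    exact (next_le s x hxR hsx).trans_lt (hxs'.trans_lt (next_mem s' hs').2)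
  exact encard_le_encard_of_injOn (fun s hs => (next_mem s hs).1) hmono.injOn

lemma exists_interlacing {U : Set ℝ} (P : Finset ℝ) (hU : ∀ p, ∃ y ∈ U, y < p)
    (hP : ∀ p ∈ P, ∀ p' ∈ P, p < p' → ∃ y ∈ U, p < y ∧ y < p') :
    ∃ y : ℝ → ℝ, ∀ p ∈ P, y p ∈ U ∧ y p < p ∧ ∀ p' ∈ P, p' < p → p' < y p := by
  have hex (p : ℝ) : ∃ y, p ∈ P → y ∈ U ∧ y < p ∧ ∀ p' ∈ P, p' < p → p' < y := by
    by_cases hne : ({p' ∈ P | p' < p}).Nonempty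
    · obtain ⟨q, hq, hmax⟩ := Finset.exists_max_image _ id hne
      obtain ⟨hqP, hqp⟩ := Finset.mem_filter.1 hq
      by_cases hp : p ∈ P
      · obtain ⟨y, hyU, hqy, hyp⟩ := hP q hqP p hp hqp
        exact ⟨y, fun _ => ⟨hyU, hyp, fun p' hp' hlt =>
          (hmax p' (Finset.mem_filter.2 ⟨hp', hlt⟩)).trans_lt hqy⟩⟩
      · exact ⟨0, fun h => absurd h hp⟩
    · obtain ⟨y, hyU, hyp⟩ := hU p
      exact ⟨y, fun _ => ⟨hyU, hyp, fun p' hp' hlt =>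
        absurd ⟨p', Finset.mem_filter.2 ⟨hp', hlt⟩⟩ hne⟩⟩
  choose y hy using hex
  exact ⟨y, hy⟩

lemma exists_notMem_between_of_connectedComponents_ne {K : Set ℝ} {p q : K} (hpq : (p : ℝ) < q)
    (hne : (p : ConnectedComponents K) ≠ q) : ∃ y ∈ Kᶜ, (p : ℝ) < y ∧ y < q := by
  by_contra! hcon
  have hsub : Icc (p : ℝ) q ⊆ K := fun x ⟨hpx, hxq⟩ => by
    by_contra hx
    have hpx' : (p : ℝ) < x := hpx.lt_of_ne fun h => hx (h ▸ p.2)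
    exact hx (hxq.antisymm (hcon x hx hpx') ▸ q.2)
  have hpre : IsPreconnected ((↑) ⁻¹' Icc (p : ℝ) q : Set K) := by
    rw [← IsInducing.subtypeVal.isPreconnected_image, Subtype.image_preimage_coe,
      inter_eq_right.2 hsub]
    exact isPreconnected_Icc
  exact hne (ConnectedComponents.coe_eq_coe'.2
    (hpre.subset_connectedComponent ⟨hpq.le, le_rfl⟩ ⟨le_rfl, hpq.le⟩))

lemma exists_mem_between_right {K : Set ℝ} {v b : ℝ} (hv : v ∈ interior K) (hb : v < b) :
    ∃ k ∈ K, v < k ∧ k < b := by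
  have hev : ∀ᶠ k in 𝓝[>] v, k ∈ K := nhdsWithin_le_nhds (mem_interior_iff_mem_nhds.1 hv)
  obtain ⟨k, hkK, hk⟩ := (hev.and (Ioo_mem_nhdsGT hb)).exists
  exact ⟨k, hkK, hk⟩

lemma exists_mem_between_left {K : Set ℝ} {v b : ℝ} (hv : v ∈ interior K) (hb : b < v) :
    ∃ k ∈ K, b < k ∧ k < v := by
  have hev : ∀ᶠ k in 𝓝[<] v, k ∈ K := nhdsWithin_le_nhds (mem_interior_iff_mem_nhds.1 hv)
  obtain ⟨k, hkK, hk⟩ := (hev.and (Ioo_mem_nhdsLT hb)).exists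
  exact ⟨k, hkK, hk⟩

variable {K V G R : Set ℝ} {g : ℝ → ℝ}

lemma encard_le_encard_of_separation (hK : BddAbove K) (hKG : Kᶜ ⊆ G) (hR : R.Finite)
    (hsep : ∀ y ∈ G, ∀ y' ∈ G, ∀ k ∈ K, y < k → k < y' → ∃ x ∈ R, g y < x ∧ x ≤ g y')
    {S : Set ℝ} (hSG : S ⊆ G) (hlast : ∀ s ∈ S, ∃ k ∈ K, s < k)
    (hbetween : ∀ s ∈ S, ∀ s' ∈ S, s < s' → ∃ k ∈ K, s < k ∧ k < s') :
    S.encard ≤ R.encard := by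
  obtain ⟨M, hM⟩ := hK
  obtain ⟨y₁, hy₁⟩ := exists_gt M
  have hy₁G : y₁ ∈ G := hKG fun hyK => hy₁.not_ge (hM hyK)
  refine encard_le_encard_of_interlacing hR (g := g) (fun s hs => ?_) fun s hs s' hs' hss' => ?_
  · obtain ⟨k, hk, hsk⟩ := hlast s hs
    obtain ⟨x, hx, hsx, -⟩ := hsep s (hSG hs) y₁ hy₁G k hk hsk ((hM hk).trans_lt hy₁)
    exact ⟨x, hx, hsx⟩
  · obtain ⟨k, hk, hsk, hks'⟩ := hbetween s hs s' hs' hss'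
    exact hsep s (hSG hs) s' (hSG hs') k hk hsk hks'

lemma card_add_encard_le_of_separation (hK : Bornology.IsBounded K) (hKG : Kᶜ ⊆ G) (hVG : V ⊆ G)
    (hVK : V ⊆ interior K) (hR : R.Finite)
    (hsep : ∀ y ∈ G, ∀ y' ∈ G, ∀ k ∈ K, y < k → k < y' → ∃ x ∈ R, g y < x ∧ x ≤ g y')
    {P : Finset ℝ} (hPK : (P : Set ℝ) ⊆ K)
    (hP : ∀ p ∈ P, ∀ p' ∈ P, p < p' → ∃ y ∈ Kᶜ, p < y ∧ y < p') :
    P.card + V.encard ≤ R.encard := by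
  have hfar (p : ℝ) : ∃ y ∈ Kᶜ, y < p := by
    obtain ⟨m, hm⟩ := hK.bddBelow
    obtain ⟨y, hy⟩ := exists_lt (min m p)
    exact ⟨y, fun hyK => (hy.trans_le (min_le_left m p)).not_ge (hm hyK),
      hy.trans_le (min_le_right m p)⟩
  obtain ⟨y, hy⟩ := exists_interlacing P hfar hP
  have hmono : StrictMonoOn y P := fun p hp p' hp' hlt =>
    (hy p hp).2.1.trans ((hy p' hp').2.2 p hp hlt)
  have hdisj : Disjoint (y '' P) V := disjoint_left.2 <| by
    rintro _ ⟨p, hp, rfl⟩ hV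
    exact (hy p hp).1 (interior_subset (hVK hV))
  rw [← encard_coe_eq_coe_finsetCard, ← hmono.injOn.encard_image, ← encard_union_eq hdisj]
  refine encard_le_encard_of_separation hK.bddAbove hKG hR hsep
    (union_subset (image_subset_iff.2 fun p hp => hKG (hy p hp).1) hVG) ?_ ?_
  · rintro _ (⟨p, hp, rfl⟩ | hs)
    · exact ⟨p, hPK hp, (hy p hp).2.1⟩
    · exact (exists_mem_between_right (hVK hs) (lt_add_one _)).imp fun k hk => ⟨hk.1, hk.2.1⟩
  · rintro _ (⟨p, hp, rfl⟩ | hs) s' hs' hss'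
    · obtain ⟨p', hp', rfl⟩ | hs' := hs'
      · exact ⟨p, hPK hp, (hy p hp).2.1, (hy p' hp').2.2 p hp ((hmono.lt_iff_lt hp hp').1 hss')⟩
      · exact exists_mem_between_left (hVK hs') hss'
    · exact exists_mem_between_right (hVK hs) hss'

theorem card_connectedComponents_add_card_le (hK : Bornology.IsBounded K) (hKG : Kᶜ ⊆ G)
    (hVG : V ⊆ G) (hVK : V ⊆ interior K) (hR : R.Finite)
    (hsep : ∀ y ∈ G, ∀ y' ∈ G, ∀ k ∈ K, y < k → k < y' → ∃ x ∈ R, g y < x ∧ x ≤ g y') :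
    Finite (ConnectedComponents K) ∧ V.Finite ∧
      Nat.card (ConnectedComponents K) + Nat.card V ≤ R.ncard := by
  classical
  obtain ⟨rep, hrep⟩ := (ConnectedComponents.surjective_coe (α := K)).hasRightInverse
  have hinj : Function.Injective fun c => (rep c : ℝ) :=
    Subtype.val_injective.comp hrep.injective
  have hcount (A : Finset (ConnectedComponents K)) : A.card + V.encard ≤ R.ncard := by
    rw [hR.cast_ncard_eq, ← Finset.card_image_of_injective A hinj]
    refine card_add_encard_le_of_separation hK hKG hVG hVK hR hsep ?_ ?_
    · intro p hp
      obtain ⟨c, -, rfl⟩ := Finset.mem_image.1 hp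
      exact (rep c).2
    · simp only [Finset.mem_image, forall_exists_index, and_imp]
      rintro _ c - rfl _ c' - rfl hlt
      refine exists_notMem_between_of_connectedComponents_ne hlt fun h => hlt.ne ?_
      rw [hrep, hrep] at h
      rw [h]
  have hV : V.Finite := finite_of_encard_le_coe (le_add_self.trans (hcount ∅))
  have hcard (A : Finset (ConnectedComponents K)) : A.card + Nat.card V ≤ R.ncard := by
    have h := hcount A
    rw [← hV.cast_ncard_eq] at h
    exact_mod_cast h
  have : Fintype (ConnectedComponents K) :=
    fintypeOfFinsetCardLe R.ncard fun A => (Nat.le_add_right _ _).trans (hcard A)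
  refine ⟨inferInstance, hV, ?_⟩
  rw [Nat.card_eq_fintype_card, ← Finset.card_univ]
  exact hcard Finset.univ

end Counting

section Bands

/-- `μ` is a measure with compact support whose absolutely continuous part lives on the bands
`[a j, b j]`, whose support has finitely many points outside the bands, and which is so large near
each point `r` of a band that `∫ (x - r)⁻² dμ(x) = ∞`. Whatever singular part sits inside the bands
is left unspecified. -/
structure IsMultiBand (μ : Measure ℝ) {n : ℕ} (a b : Fin n → ℝ) : Prop where
  isCompact_msupp : IsCompact (msupp μ)
  msupp_acPart : msupp (acPart μ) = ⋃ j, Icc (a j) (b j)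
  finite_outer : (msupp μ \ msupp (acPart μ)).Finite
  lintegral_inv_sq : ∀ r ∈ msupp (acPart μ), ∫⁻ x, ENNReal.ofReal (((x - r) ^ 2)⁻¹) ∂μ = ⊤

namespace IsMultiBand

variable {μ : Measure ℝ} {n : ℕ} {a b : Fin n → ℝ} (hμ : IsMultiBand μ a b) {r s u z : ℝ}
include hμ

theorem notMem_msupp_restrict (hr : r ∉ msupp (acPart μ)) : r ∉ msupp (μ.restrict {r}ᶜ) := by
  have hclosed : IsClosed (msupp (acPart μ) ∪ (msupp μ \ msupp (acPart μ)) \ {r}) :=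
    isClosed_msupp.union (hμ.finite_outer.subset sdiff_subset).isClosed
  refine notMem_msupp_iff.2 ⟨_, hclosed.isOpen_compl.mem_nhds fun h => ?_, ?_⟩
  · exact h.elim hr fun h' => h'.2 rfl
  · rw [Measure.restrict_apply hclosed.isOpen_compl.measurableSet]
    refine measure_mono_null (t := (msupp μ)ᶜ) (fun x hx hxs => ?_) ae_mem_msupp
    by_cases hxa : x ∈ msupp (acPart μ)
    · exact hx.1 (.inl hxa)
    · exact hx.1 (.inr ⟨⟨hxs, hxa⟩, hx.2⟩)

theorem exists_left_endpoint_of_mem_Ioc (hz : z ∉ msupp (acPart μ)) (hu : u ∈ msupp (acPart μ))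
    (hzu : z ≤ u) : ∃ j, a j ∈ Ioc z u := by
  simp only [hμ.msupp_acPart, mem_iUnion, not_exists] at hz hu
  obtain ⟨j, hj⟩ := hu
  exact ⟨j, not_le.1 fun h => hz j ⟨h, hzu.trans hj.2⟩, hj.1⟩

theorem exists_representative_mem_Ioc (hz : z ∉ msupp (acPart μ)) (hu : u ∈ msupp μ) (hzu : z < u) :
    ∃ x ∈ range a ∪ msupp μ \ msupp (acPart μ), x ∈ Ioc z u := by
  by_cases hua : u ∈ msupp (acPart μ)
  · obtain ⟨j, hj⟩ := hμ.exists_left_endpoint_of_mem_Ioc hz hua hzu.le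
    exact ⟨a j, .inl ⟨j, rfl⟩, hj⟩
  · exact ⟨u, .inr ⟨hu, hua⟩, hzu, le_rfl⟩

end IsMultiBand

end Bands

section Zeros

variable {μ : Measure ℝ} {x y z : ℝ}

lemma integral_pos_of_forall_mem_msupp [NeZero μ] {f : ℝ → ℝ} (hf : Integrable f μ)
    (hpos : ∀ u ∈ msupp μ, 0 < f u) : 0 < ∫ x, f x ∂μ := by
  have hae : ∀ᵐ x ∂μ, 0 < f x := ae_mem_msupp.mono hpos
  refine (integral_nonneg_of_ae (hae.mono fun x hx => hx.le)).lt_of_ne' fun h0 => ?_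
  rw [integral_eq_zero_iff_of_nonneg_ae (hae.mono fun x hx => hx.le) hf] at h0
  obtain ⟨x, hx, hx0⟩ := (hae.and h0).exists
  exact hx.ne' hx0

variable [IsFiniteMeasure μ]

lemma integrable_inv_sub_ofReal (hz : z ∉ msupp μ) : Integrable (fun x : ℝ => (x - z)⁻¹) μ := by
  have h := (integrable_inv_sub (mt ofReal_mem_image_msupp.1 hz)).re
  refine h.congr (ae_of_all _ fun x => ?_)
  norm_cast

variable [NeZero μ]

lemma stTR_lt_stTR (hxy : x < y) (h : ∀ u ∈ Icc x y, u ∉ msupp μ) : stTR μ x < stTR μ y := by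
  have hx := integrable_inv_sub_ofReal (h x (left_mem_Icc.2 hxy.le))
  have hy := integrable_inv_sub_ofReal (h y (right_mem_Icc.2 hxy.le))
  rw [← sub_pos, stTR, stTR, ← integral_sub hy hx]
  refine integral_pos_of_forall_mem_msupp (hy.sub hx) fun u hu => sub_pos.2 ?_
  rcases lt_or_ge u x with hux | hxu
  · exact (inv_lt_inv_of_neg (by linarith) (by linarith)).2 (by linarith)
  · have hyu : y < u := not_le.1 fun huy => h u ⟨hxu, huy⟩ hu
    exact inv_strictAnti₀ (by linarith) (by linarith)

lemma exists_mem_msupp_lt_of_stTR_eq_zero (hz : z ∉ msupp μ) (h0 : stTR μ z = 0) :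
    ∃ u ∈ msupp μ, u < z := by
  by_contra! hcon
  refine (integral_pos_of_forall_mem_msupp (integrable_inv_sub_ofReal hz) fun u hu => ?_).ne' h0
  exact inv_pos.2 (sub_pos.2 ((hcon u hu).lt_of_ne fun h => hz (h ▸ hu)))

lemma exists_mem_msupp_gt_of_stTR_eq_zero (hz : z ∉ msupp μ) (h0 : stTR μ z = 0) :
    ∃ u ∈ msupp μ, z < u := by
  by_contra! hcon
  refine (integral_pos_of_forall_mem_msupp (integrable_inv_sub_ofReal hz).neg fun u hu => ?_).ne'
    ((integral_neg _).trans (neg_eq_zero.2 h0))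
  exact neg_pos.2 (inv_lt_zero.2 (sub_neg.2 ((hcon u hu).lt_of_ne fun h => hz (h ▸ hu))))

lemma exists_mem_msupp_between {z z' : ℝ} (hzz' : z < z') (hz : z ∉ msupp μ) (h0 : stTR μ z = 0)
    (h0' : stTR μ z' = 0) : ∃ u ∈ msupp μ, z < u ∧ u ≤ z' := by
  by_contra! hcon
  refine (stTR_lt_stTR hzz' fun u hu hus => ?_).ne (h0.trans h0'.symm)
  exact (hcon u hus (hu.1.lt_of_ne fun h => hz (h ▸ hus))).not_ge hu.2

/-- Besides the zeros, a point to the left of the support is also followed by a representative of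
the bands and outer points, which accounts for the `1`. -/
theorem IsMultiBand.encard_zeros_add_one_le {n : ℕ} {a b : Fin n → ℝ} (hμ : IsMultiBand μ a b) :
    {E | E ∉ msupp μ ∧ stTR μ E = 0}.encard + 1 ≤ n + (msupp μ \ msupp (acPart μ)).encard := by
  set Z : Set ℝ := {E | E ∉ msupp μ ∧ stTR μ E = 0}
  obtain ⟨m, hm⟩ := hμ.isCompact_msupp.bddBelow
  obtain ⟨y₀, hy₀⟩ := exists_lt m
  have hy₀_lt : ∀ u ∈ msupp μ, y₀ < u := fun u hu => hy₀.trans_le (hm hu)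
  have hgap : ∀ s ∈ insert y₀ Z, s ∉ msupp (acPart μ) := by
    rintro s (rfl | hs) h
    · exact (hy₀_lt s (msupp_acPart_subset μ h)).false
    · exact hs.1 (msupp_acPart_subset μ h)
  have hy₀Z : ∀ z ∈ Z, y₀ < z := fun z hz => by
    obtain ⟨u, hu, huz⟩ := exists_mem_msupp_lt_of_stTR_eq_zero hz.1 hz.2
    exact (hy₀_lt u hu).trans huz
  have hcount : (insert y₀ Z).encard ≤ (range a ∪ msupp μ \ msupp (acPart μ)).encard := by
    refine encard_le_encard_of_interlacing ((finite_range a).union hμ.finite_outer) (g := id) ?_ ?_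
    · intro s hs
      obtain ⟨u, hu, hsu⟩ : ∃ u ∈ msupp μ, s < u := by
        obtain rfl | hs := hs
        · exact nonempty_msupp.imp fun u hu => ⟨hu, hy₀_lt u hu⟩
        · exact exists_mem_msupp_gt_of_stTR_eq_zero hs.1 hs.2
      obtain ⟨x, hx, hsx, -⟩ := hμ.exists_representative_mem_Ioc (hgap s hs) hu hsu
      exact ⟨x, hx, hsx⟩
    · intro s hs s' hs' hss'
      obtain ⟨u, hu, hsu, hus'⟩ : ∃ u ∈ msupp μ, s < u ∧ u ≤ s' := by
        obtain rfl | hs' := hs'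
        · exact absurd hss' (hs.elim (fun h => h.not_lt) fun h => (hy₀Z s h).not_gt)
        obtain rfl | hs := hs
        · obtain ⟨u, hu, hus'⟩ := exists_mem_msupp_lt_of_stTR_eq_zero hs'.1 hs'.2
          exact ⟨u, hu, hy₀_lt u hu, hus'.le⟩
        · exact exists_mem_msupp_between hss' hs.1 hs.2 hs'.2
      obtain ⟨x, hx, hsx, hxu⟩ := hμ.exists_representative_mem_Ioc (hgap s hs) hu hsu
      exact ⟨x, hx, hsx, hxu.trans hus'⟩
  rw [encard_insert_of_notMem fun h => (hy₀Z y₀ h).false] at hcount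
  refine hcount.trans ((encard_union_le _ _).trans (add_le_add_left ?_ _))
  rw [← image_univ]
  exact (encard_image_le a univ).trans (by simp [encard_univ])

theorem IsMultiBand.finite_zeros {n : ℕ} {a b : Fin n → ℝ} (hμ : IsMultiBand μ a b) :
    {E | E ∉ msupp μ ∧ stTR μ E = 0}.Finite := by
  refine encard_lt_top_iff.1 (lt_of_le_of_lt (le_self_add.trans hμ.encard_zeros_add_one_le) ?_)
  exact ENat.add_lt_top.2 ⟨ENat.natCast_lt_top n, hμ.finite_outer.encard_lt_top⟩

end Zeros

section FreePower

variable {μ μt : Measure ℝ} [IsProbabilityMeasure μ] {t : ℝ} {ω : ℂ → ℂ} {n : ℕ} {a b : Fin n → ℝ}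
  {e s s' k : ℝ}

namespace IsFreePow

variable (hμt : IsFreePow μ ω μt) (hω : IsSubordT μ t ω) (ht : 1 < t)
include hμt hω ht

/-- If there were no such `x`, then `F_μ` would be analytic on `[ω s, ω s']`, so `ω` would be real
on `(s, s')` and `μt` would have no absolutely continuous part there. -/
theorem exists_mem_Ioc_re (hμ : IsMultiBand μ a b) (hs : (ω s).im = 0)
    (hsupp : (ω s).re ∉ msupp (acPart μ)) (hs' : (ω s').im = 0) (hk : k ∈ msupp (acPart μt))
    (hsk : s < k) (hks' : k < s') :
    ∃ x ∈ range a ∪ {E | E ∉ msupp μ ∧ stTR μ E = 0}, (ω s).re < x ∧ x ≤ (ω s').re := by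
  have hωs : ω s = (ω s).re := Complex.ext rfl hs
  by_contra! hcon
  have han : ∀ x ∈ Icc (ω s).re (ω s').re, AnalyticAt ℂ (nrTExt μ) x := fun x hx => by
    refine analyticAt_nrTExt (hμ.notMem_msupp_restrict fun hxs => ?_) fun hxμ hx0 => ?_
    · obtain ⟨j, hj⟩ := hμ.exists_left_endpoint_of_mem_Ioc hsupp hxs hx.1
      exact (hcon _ (.inl ⟨j, rfl⟩) hj.1).not_ge (hj.2.trans hx.2)
    · rcases hx.1.eq_or_lt with rfl | hlt
      · exact hω.stTR_ne_zero_of_apply_eq ht hωs hxμ hx0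
      · exact (hcon x (.inr ⟨hxμ, hx0⟩) hlt).not_ge hx.2
  refine notMem_msupp_iff.2 ⟨Ioo s s', Ioo_mem_nhds hsk hks', ?_⟩ hk
  refine measure_mono_null (fun e he => ?_) (hμt.acPart_setOf_im_eq_zero hω ht)
  exact hω.im_eq_zero_of_analyticAt ht hωs (Complex.ext rfl hs') han (Ioo_subset_Icc_self he)

theorem im_eq_zero_and_re_notMem_of_notMem_msupp (hμ : IsMultiBand μ a b)
    (he : e ∉ msupp (acPart μt)) : (ω e).im = 0 ∧ (ω e).re ∉ msupp (acPart μ) := by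
  have him := hμt.im_eq_zero_of_notMem_msupp hω ht he
  exact ⟨him, fun hsupp => he
    (hμt.mem_msupp_acPart_of_apply_eq hω ht hμ.lintegral_inv_sq (Complex.ext rfl him) hsupp)⟩

theorem im_eq_zero_and_re_notMem_of_densityVanishesAt (hμ : IsMultiBand μ a b)
    (he : densityVanishesAt μt e) : (ω e).im = 0 ∧ (ω e).re ∉ msupp (acPart μ) := by
  obtain ⟨him, hne⟩ := (hμt.densityVanishesAt_iff hω ht).1 he
  have hωe : ω e = (ω e).re := Complex.ext rfl him
  refine ⟨him, fun hsupp => hne ?_⟩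
  have hatom := hω.singleton_ne_zero_of_apply_eq ht hωe (hμ.lintegral_inv_sq _ hsupp)
  rw [hωe]
  exact_mod_cast (hω.eq_mul_of_apply_eq_of_singleton_ne_zero ht hωe hatom).symm

theorem isBounded_msupp_acPart (hμ : IsMultiBand μ a b) :
    Bornology.IsBounded (msupp (acPart μt)) := by
  obtain ⟨hbelow, habove⟩ := isBounded_iff_bddBelow_bddAbove.1
    ((finite_range a).union hμ.finite_zeros).isBounded
  have hbdd := hμ.isCompact_msupp.isBounded
  have hgood : ∀ᶠ x : ℝ in Bornology.cobounded ℝ,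
      ω (subordInv μ t x).re = x ∧ x ∉ msupp (acPart μ) := by
    filter_upwards [hω.eventually_apply_re_subordInv ht hbdd, Bornology.isBounded_def.1 hbdd]
      with x hx hxs
    exact ⟨hx, fun h => hxs (msupp_acPart_subset μ h)⟩
  have hsep {x x' k : ℝ} (hx : ω (subordInv μ t x).re = x ∧ x ∉ msupp (acPart μ))
      (hx' : ω (subordInv μ t x').re = x') (hk : k ∈ msupp (acPart μt))
      (hxk : (subordInv μ t x).re < k) (hkx' : k < (subordInv μ t x').re) :
      ∃ y ∈ range a ∪ {E | E ∉ msupp μ ∧ stTR μ E = 0}, x < y ∧ y ≤ x' := by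
    simpa only [hx.1, hx', Complex.ofReal_re] using
      hμt.exists_mem_Ioc_re hω ht hμ (by simp [hx.1]) (by simp [hx.1, hx.2]) (by simp [hx']) hk
        hxk hkx'
  have hbot := hgood.filter_mono IsOrderBornology.atBot_le_cobounded
  have htop := hgood.filter_mono IsOrderBornology.atTop_le_cobounded
  refine isBounded_iff_bddBelow_bddAbove.2 ⟨?_, ?_⟩
  · obtain ⟨m, hm⟩ := hbelow
    obtain ⟨x, hx, hxm⟩ := (hbot.and (eventually_lt_atBot m)).exists
    refine ⟨(subordInv μ t x).re, fun k hk => not_lt.1 fun hkx => ?_⟩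
    obtain ⟨x', hx', hx'k⟩ :=
      (hbot.and ((tendsto_re_subordInv_atBot hbdd t).eventually_lt_atBot k)).exists
    obtain ⟨y, hy, -, hyx⟩ := hsep hx' hx.1 hk hx'k hkx
    exact (hyx.trans_lt hxm).not_ge (hm hy)
  · obtain ⟨m, hm⟩ := habove
    obtain ⟨x, hx, hmx⟩ := (htop.and (eventually_gt_atTop m)).exists
    refine ⟨(subordInv μ t x).re, fun k hk => not_lt.1 fun hxk => ?_⟩
    obtain ⟨x', hx', hkx'⟩ :=
      (htop.and ((tendsto_re_subordInv_atTop hbdd t).eventually_gt_atTop k)).exists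
    obtain ⟨y, hy, hxy, -⟩ := hsep hx hx'.1 hk hxk hkx'
    exact (hmx.trans hxy).not_ge (hm hy)

theorem card_connectedComponents_add_card_vanishing_le (hμ : IsMultiBand μ a b) :
    Finite (ConnectedComponents (msupp (acPart μt))) ∧
      {x | x ∈ interior (msupp (acPart μt)) ∧ densityVanishesAt μt x}.Finite ∧
      Nat.card (ConnectedComponents (msupp (acPart μt)))
          + Nat.card {x | x ∈ interior (msupp (acPart μt)) ∧ densityVanishesAt μt x}
        ≤ n + Nat.card {E | E ∉ msupp μ ∧ stTR μ E = 0} := by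
  obtain ⟨hfin, hfin', hle⟩ := card_connectedComponents_add_card_le
    (K := msupp (acPart μt)) (V := {x | x ∈ interior (msupp (acPart μt)) ∧ densityVanishesAt μt x})
    (G := {e | (ω e).im = 0 ∧ (ω e).re ∉ msupp (acPart μ)}) (g := fun e => (ω e).re)
    (hμt.isBounded_msupp_acPart hω ht hμ)
    (fun e he => hμt.im_eq_zero_and_re_notMem_of_notMem_msupp hω ht hμ he)
    (fun e he => hμt.im_eq_zero_and_re_notMem_of_densityVanishesAt hω ht hμ he.2)
    (fun e he => he.1) ((finite_range a).union hμ.finite_zeros)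
    (fun s hs s' hs' k hk hsk hks' => hμt.exists_mem_Ioc_re hω ht hμ hs.1 hs.2 hs'.1 hk hsk hks')
  refine ⟨hfin, hfin', hle.trans ((ncard_union_le _ _).trans (add_le_add_left ?_ _))⟩
  rw [← image_univ]
  exact (ncard_image_le finite_univ).trans (by simp [ncard_univ])

theorem mem_diverging_mul_iff {w : ℝ} :
    (t * w ∈ msupp (acPart μt) ∧ μt {t * w} = 0 ∧ densityDivergesAt μt (t * w)) ↔
      μ {w} = ENNReal.ofReal (1 - 1 / t) := by
  have := hμt.1
  have ht0 : 0 < t := one_pos.trans ht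
  have hmass : 0 < 1 - 1 / t := by rwa [sub_pos, div_lt_one ht0]
  have hfix : t * ω (t * w : ℝ) = (t * w : ℝ) ↔ ω (t * w : ℝ) = w := by
    rw [Complex.ofReal_mul, mul_right_inj' (Complex.ofReal_ne_zero.2 ht0.ne')]
  constructor
  · rintro ⟨-, h0, hdiv⟩
    have hw := hfix.1 ((hμt.densityDivergesAt_iff hω ht).1 hdiv)
    have h := hμt.singleton_mul hω ht hw
    rw [measureReal_def, h0, ENNReal.toReal_zero] at h
    rw [← ofReal_measureReal]
    congr 1
    field_simp
    linarith
  · intro hw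
    have hw' : t * μ.real {w} = t - 1 := by
      rw [measureReal_def, hw, ENNReal.toReal_ofReal hmass.le]
      field_simp
    have hcompl : μ {w}ᶜ ≠ 0 := fun h => by
      rw [prob_compl_eq_zero_iff (measurableSet_singleton w), hw, ENNReal.ofReal_eq_one] at h
      exact (one_div_pos.2 ht0).ne' (by linarith)
    have hωw := hω.apply_mul_eq ht hw'.ge hcompl
    have h0 : μt {t * w} = 0 := by
      rw [← measureReal_eq_zero_iff, hμt.singleton_mul hω ht hωw, hw', sub_self]
    exact ⟨hμt.mem_msupp_of_mul_apply_eq hω ht (hfix.2 hωw) h0, h0,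
      (hμt.densityDivergesAt_iff hω ht).2 (hfix.2 hωw)⟩

theorem card_diverging :
    Nat.card {x | x ∈ msupp (acPart μt) ∧ μt {x} = 0 ∧ densityDivergesAt μt x}
      = Nat.card {w | μ {w} = ENNReal.ofReal (1 - 1 / t)} :=
  Nat.card_congr ((Equiv.mulLeft₀ t (by linarith)).subtypeEquiv fun _ =>
    (hμt.mem_diverging_mul_iff hω ht).symm).symm

end IsFreePow

theorem free_power_support_bound_general (hμ : IsMultiBand μ a b) (hω : IsSubordT μ t ω)
    (hμt : IsFreePow μ ω μt) (ht : 1 < t) :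
    (Finite (ConnectedComponents (msupp (acPart μt))) ∧
      {x | x ∈ interior (msupp (acPart μt)) ∧ densityVanishesAt μt x}.Finite ∧
      Nat.card (ConnectedComponents (msupp (acPart μt)))
          + Nat.card {x | x ∈ interior (msupp (acPart μt)) ∧ densityVanishesAt μt x}
        ≤ n + Nat.card {E | E ∉ msupp μ ∧ stTR μ E = 0}) ∧
    ({E | E ∉ msupp μ ∧ stTR μ E = 0}.Finite ∧
      n + Nat.card {E | E ∉ msupp μ ∧ stTR μ E = 0}
        ≤ 2 * n + Nat.card ↥(msupp μ \ msupp (acPart μ)) - 1) ∧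
    Nat.card {x | x ∈ msupp (acPart μt) ∧ μt {x} = 0 ∧ densityDivergesAt μt x}
      = Nat.card {w | μ {w} = ENNReal.ofReal (1 - 1 / t)} := by
  refine ⟨hμt.card_connectedComponents_add_card_vanishing_le hω ht hμ, ⟨hμ.finite_zeros, ?_⟩,
    hμt.card_diverging hω ht⟩
  have h := hμ.encard_zeros_add_one_le
  rw [← hμ.finite_zeros.cast_ncard_eq, ← hμ.finite_outer.cast_ncard_eq] at h
  norm_cast at h
  simp only [Nat.card_coe_set_eq]
  omega

end FreePower

section PowerLaw

variable {a b c r : ℝ}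

theorem lintegral_Ioo_inv_abs_sub_eq_top (hab : a < b) (hr : r ∈ Icc a b) :
    ∫⁻ x in Ioo a b, ENNReal.ofReal |x - r|⁻¹ = ⊤ := by
  by_contra hne
  suffices h : IntervalIntegrable (fun x => (x - r)⁻¹) volume a b by
    refine (intervalIntegrable_sub_inv_iff.1 h).elim hab.ne fun h => h ?_
    rwa [uIcc_of_le hab.le]
  rw [intervalIntegrable_iff_integrableOn_Ioo_of_le hab.le]
  refine ⟨by fun_prop, ?_⟩
  rw [hasFiniteIntegral_iff_norm]
  simpa only [norm_inv, Real.norm_eq_abs] using lt_top_iff_ne_top.2 hne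

theorem lintegral_inv_sq_withDensity_eq_top (hab : a < b) (hr : r ∈ Icc a b) (hc : 0 < c)
    {f : ℝ → ℝ} (hf : ∀ᵐ x, x ∈ Ioo a b → c * |x - r| ≤ f x) :
    ∫⁻ x, ENNReal.ofReal ((x - r) ^ 2)⁻¹ ∂volume.withDensity (fun x => ENNReal.ofReal (f x))
      = ⊤ := by
  set g : ℝ → ENNReal := (Ioo a b).indicator fun x => ENNReal.ofReal (c * |x - r|) with hg
  have hgf : g ≤ᵐ[volume] fun x => ENNReal.ofReal (f x) := hf.mono fun x hx =>
    indicator_apply_le' (fun hxI => ENNReal.ofReal_le_ofReal (hx hxI)) fun _ => zero_le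
  have hgm : Measurable g := Measurable.indicator (by fun_prop) measurableSet_Ioo
  have hpoint : ∀ x ∈ Ioo a b, ENNReal.ofReal c * ENNReal.ofReal |x - r|⁻¹
      = (g * fun x => ENNReal.ofReal ((x - r) ^ 2)⁻¹) x := fun x hx => by
    rw [Pi.mul_apply, hg, indicator_of_mem hx, ← ENNReal.ofReal_mul hc.le,
      ← ENNReal.ofReal_mul (by positivity), ← sq_abs]
    congr 1
    rcases eq_or_ne |x - r| 0 with h0 | h0
    · simp [h0]
    · field_simp
  rw [eq_top_iff]
  calc ⊤ = ENNReal.ofReal c * ∫⁻ x in Ioo a b, ENNReal.ofReal |x - r|⁻¹ := by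
        rw [lintegral_Ioo_inv_abs_sub_eq_top hab hr, ENNReal.mul_top (by simpa using hc)]
    _ = ∫⁻ x in Ioo a b, (g * fun x => ENNReal.ofReal ((x - r) ^ 2)⁻¹) x := by
        rw [← lintegral_const_mul _ (by fun_prop), setLIntegral_congr_fun measurableSet_Ioo hpoint]
    _ ≤ ∫⁻ x, (g * fun x => ENNReal.ofReal ((x - r) ^ 2)⁻¹) x := setLIntegral_le_lintegral _ _
    _ = ∫⁻ x, ENNReal.ofReal ((x - r) ^ 2)⁻¹ ∂volume.withDensity g :=
        (lintegral_withDensity_eq_lintegral_mul volume hgm (by fun_prop)).symm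
    _ ≤ _ := lintegral_mono' (withDensity_mono hgf) le_rfl

theorem exists_Ioo_subset_forall_mul_abs_sub_le (hab : a < b) (hr : r ∈ Icc a b) :
    ∃ a' b', a' < b' ∧ r ∈ Icc a' b' ∧ Ioo a' b' ⊆ Ioo a b ∧
      ∀ x ∈ Ioo a' b', (b - a) / 4 * |x - r| ≤ (x - a) * (b - x) := by
  rcases le_total r ((a + b) / 2) with hmid | hmid
  · refine ⟨r, (a + 3 * b) / 4, by linarith, ⟨le_rfl, by linarith⟩,
      Ioo_subset_Ioo hr.1 (by linarith), fun x hx => ?_⟩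
    rw [abs_of_pos (sub_pos.2 hx.1), mul_comm]
    exact mul_le_mul (by linarith [hr.1]) (by linarith [hx.2]) (by linarith)
      (by linarith [hr.1, hx.1])
  · refine ⟨(3 * a + b) / 4, r, by linarith, ⟨by linarith, le_rfl⟩,
      Ioo_subset_Ioo (by linarith) hr.2, fun x hx => ?_⟩
    rw [abs_of_neg (sub_neg.2 hx.2), neg_sub]
    exact mul_le_mul (by linarith [hx.1]) (by linarith [hr.2]) (by linarith [hx.2])
      (by linarith [hx.1])

theorem rpow_sub_one_mul_le_rpow {x y s : ℝ} (hx : 0 < x) (hxy : x ≤ y) (hs : s ≤ 1) :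
    y ^ (s - 1) * x ≤ x ^ s := by
  have h : y ^ (s - 1) ≤ x ^ (s - 1) := Real.rpow_le_rpow_of_nonpos hx hxy (by linarith)
  calc y ^ (s - 1) * x ≤ x ^ (s - 1) * x := by gcongr
    _ = x ^ s := by rw [← Real.rpow_add_one hx.ne', sub_add_cancel]

end PowerLaw

namespace Assumption1

variable {μ : Measure ℝ} {nac npp nppout : ℕ} {Em Ep : Fin nac → ℝ} {atom : Fin npp → ℝ}
  {ρ : ℝ → ℝ} (hμ : Assumption1 μ nac npp nppout Em Ep atom ρ)
include hμ

theorem exists_mul_le_density (j : Fin nac) :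
    ∃ k > 0, ∀ᵐ x, x ∈ Ioo (Em j) (Ep j) → k * ((x - Em j) * (Ep j - x)) ≤ ρ x := by
  obtain ⟨tm, tp, C, -, htm, -, htp, hC, hρ⟩ := hμ.power_law j
  have hL : 0 < Ep j - Em j := sub_pos.2 (hμ.lt j)
  refine ⟨C⁻¹ * ((Ep j - Em j) ^ (tm - 1) * (Ep j - Em j) ^ (tp - 1)), by positivity, ?_⟩
  filter_upwards [hρ] with x hx hxI
  have hxm : 0 < x - Em j := sub_pos.2 hxI.1
  have hxp : 0 < Ep j - x := sub_pos.2 hxI.2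
  have hm := rpow_sub_one_mul_le_rpow hxm (sub_le_sub_right hxI.2.le _) htm.le
  have hp := rpow_sub_one_mul_le_rpow hxp (sub_le_sub_left hxI.1.le _) htp.le
  have hlow := (hx (Ioo_subset_Icc_self hxI)).1.le
  rw [le_div_iff₀ (mul_pos (Real.rpow_pos_of_pos hxm tm) (Real.rpow_pos_of_pos hxp tp))] at hlow
  calc _ = C⁻¹ * (((Ep j - Em j) ^ (tm - 1) * (x - Em j))
          * ((Ep j - Em j) ^ (tp - 1) * (Ep j - x))) := by ring
    _ ≤ C⁻¹ * ((x - Em j) ^ tm * (Ep j - x) ^ tp) := by gcongr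
    _ ≤ ρ x := hlow

/-- The exponents being less than `1`, the density near `r` is at least a multiple of `|x - r|` on
one side of `r`. -/
theorem lintegral_inv_sq_eq_top {r : ℝ} (hr : r ∈ msupp (acPart μ)) :
    ∫⁻ x, ENNReal.ofReal ((x - r) ^ 2)⁻¹ ∂μ = ⊤ := by
  rw [hμ.supp_ac, mem_iUnion] at hr
  obtain ⟨j, hj⟩ := hr
  obtain ⟨k, hk, hρ⟩ := hμ.exists_mul_le_density j
  obtain ⟨a, b, hab, hr, hsub, hlow⟩ := exists_Ioo_subset_forall_mul_abs_sub_le (hμ.lt j) hj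
  have hL : 0 < Ep j - Em j := sub_pos.2 (hμ.lt j)
  have hac := lintegral_inv_sq_withDensity_eq_top hab hr (c := k * ((Ep j - Em j) / 4)) (f := ρ)
    (by positivity) <| hρ.mono fun x hx hxI => by
      rw [mul_assoc]
      exact (mul_le_mul_of_nonneg_left (hlow x hxI) hk.le).trans (hx (hsub hxI))
  rw [← hμ.ac_density] at hac
  exact eq_top_iff.2 (hac.ge.trans (lintegral_mono' (acPart_le μ) le_rfl))

theorem singularPart_compl_range_atom : μ.singularPart volume (range atom)ᶜ = 0 := by
  rw [hμ.sing_atomic, Measure.finsetSum_apply]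
  simp [Measure.dirac_apply' _ (finite_range atom).measurableSet.compl]

theorem mem_range_atom_of_singleton_ne_zero {w : ℝ} (hw : μ {w} ≠ 0) : w ∈ range atom := by
  have := hμ.prob
  by_contra hwa
  exact hw (measure_eq_zero_of_singularPart_of_acPart
    (measure_mono_null (singleton_subset_iff.2 hwa) hμ.singularPart_compl_range_atom)
    (acPart_absolutelyContinuous μ (measure_singleton w)))

theorem msupp_sdiff_eq : msupp μ \ msupp (acPart μ) = atom '' {j | atom j ∉ msupp (acPart μ)} := by
  have := hμ.prob
  refine Subset.antisymm (fun x hx => ?_) ?_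
  · suffices hxa : x ∈ range atom by
      obtain ⟨j, rfl⟩ := hxa
      exact ⟨j, hx.2, rfl⟩
    by_contra hxa
    refine notMem_msupp_iff.2 ⟨(msupp (acPart μ))ᶜ ∩ (range atom)ᶜ, ?_, ?_⟩ hx.1
    · exact (isClosed_msupp.isOpen_compl.inter (finite_range atom).isClosed.isOpen_compl).mem_nhds
        ⟨hx.2, hxa⟩
    · exact measure_eq_zero_of_singularPart_of_acPart
        (measure_mono_null inter_subset_right hμ.singularPart_compl_range_atom)
        (measure_mono_null inter_subset_left ae_mem_msupp)
  · rintro _ ⟨j, hj, rfl⟩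
    exact ⟨mem_msupp_of_singleton_ne_zero (hμ.atom_pos j).ne', hj⟩

theorem isMultiBand : IsMultiBand μ Em Ep where
  isCompact_msupp := hμ.compact
  msupp_acPart := hμ.supp_ac
  finite_outer := hμ.msupp_sdiff_eq ▸ toFinite _
  lintegral_inv_sq _ hr := hμ.lintegral_inv_sq_eq_top hr

theorem card_msupp_sdiff : Nat.card ↥(msupp μ \ msupp (acPart μ)) = nppout := by
  rw [hμ.msupp_sdiff_eq, Nat.card_image_of_injective hμ.atom_inj]
  exact hμ.out_card

theorem card_singleton_eq {m : ENNReal} (hm : m ≠ 0) :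
    Nat.card {w | μ {w} = m} = Nat.card {j // μ {atom j} = m} := by
  have himage : {w | μ {w} = m} = atom '' {j | μ {atom j} = m} := by
    refine Subset.antisymm (fun w hw => ?_) (image_subset_iff.2 fun j hj => hj)
    obtain ⟨j, rfl⟩ := hμ.mem_range_atom_of_singleton_ne_zero (hw.trans_ne hm)
    exact ⟨j, hw, rfl⟩
  rw [himage, Nat.card_image_of_injective hμ.atom_inj]
  rfl

end Assumption1

/-- Bound on the number of components, interior zeros and divergence
points of the density of `μ^{⊞ t}`. -/
theorem free_power_support_bound
    (μ μt : Measure ℝ) (t : ℝ) (ht : 1 < t)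
    (nac npp nppout : ℕ) (Em Ep : Fin nac → ℝ) (atom : Fin npp → ℝ) (ρ : ℝ → ℝ)
    (hμ : Assumption1 μ nac npp nppout Em Ep atom ρ)
    (ω : ℂ → ℂ) (hω : IsSubordT μ t ω)
    (hμt : IsFreePow μ ω μt) :
    (Nat.card (ConnectedComponents ↥(msupp (acPart μt)))
        + Nat.card ↥{x : ℝ | x ∈ interior (msupp (acPart μt)) ∧ densityVanishesAt μt x}
      ≤ nac + Nat.card ↥{E : ℝ | E ∉ msupp μ ∧ stTR μ E = 0}) ∧
    (nac + Nat.card ↥{E : ℝ | E ∉ msupp μ ∧ stTR μ E = 0}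
      ≤ 2 * nac + nppout - 1) ∧
    Nat.card ↥{x : ℝ | x ∈ msupp (acPart μt) ∧ μt {x} = 0 ∧ densityDivergesAt μt x}
      = Nat.card {j : Fin npp // μ {atom j} = ENNReal.ofReal (1 - 1 / t)} := by
  have := hμ.prob
  have hmass : 0 < 1 - 1 / t := sub_pos.2 ((div_lt_one (one_pos.trans ht)).2 ht)
  obtain ⟨⟨-, -, hcomponents⟩, ⟨-, hzeros⟩, hdiverging⟩ :=
    free_power_support_bound_general hμ.isMultiBand hω hμt ht
  rw [hμ.card_msupp_sdiff] at hzeros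
  rw [hμ.card_singleton_eq (ENNReal.ofReal_pos.2 hmass).ne'] at hdiverging
  exact ⟨hcomponents, hzeros, hdiverging⟩
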